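/- arXiv:1904.02310 — 2 statements merged into one kernel-verified Lean document; each statement's English description precedes it below -/
import Mathlib

section
/- Let m ≥ 4 and let e be an integer with 1 ≤ e < m/2 such that m/gcd(m,e) is even, and set ℓ = 2·gcd(m,e). Then the supports of the codewords of each of the following weights k in the dual code C̄_E^⊥ form a 2-(2^m, k, λ) design with the corresponding λ: for k = 2^{m−1} ± 2^{(m+ℓ−2)/2} (with matching signs), λ = (2^{m−1} ± 2^{(m+ℓ−2)/2})(2^{m−1} ± 2^{(m+ℓ−2)/2} − 1)/(2^ℓ(2^{ℓ/2} + 1)); for k = 2^{m−1} ± 2^{(m−2)/2} (with matching signs), λ = 2^{(m+ℓ−2)/2}(2^{m/2} ± 1)(2^{m−1} ± 2^{(m−2)/2} − 1)/(2^{ℓ/2} + 1); and for k = 2^{m−1}, λ = ((2^{ℓ/2} − 1)·2^{m−ℓ} + 1)(2^{m−1} − 1). -/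
open Polynomial Finset

/-- The polynomial `c₀ + c₁x + ⋯ + c_{n−1}x^{n−1}` associated to a vector. -/
noncomputable def codePoly {n : ℕ} (c : Fin n → ZMod 2) : Polynomial (ZMod 2) :=
  ∑ i : Fin n, Polynomial.C (c i) * Polynomial.X ^ (i : ℕ)

/-- The generator polynomial `g_E(x) = M_α(x) · M_{α^{1+2^e}}(x)`. -/
noncomputable def gE (m e : ℕ) (α : GaloisField 2 m) : Polynomial (ZMod 2) :=
  minpoly (ZMod 2) α * minpoly (ZMod 2) (α ^ (1 + 2 ^ e))

/-- The binary cyclic code `C_E` of length `2^m − 1` with generator polynomial `g_E`. -/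
def CE (m e : ℕ) (α : GaloisField 2 m) : Set (Fin (2 ^ m - 1) → ZMod 2) :=
  {c | gE m e α ∣ codePoly c}

/-- The extended code `C̄_E ⊆ F_2^{2^m}`: the first `2^m − 1` coordinates form a codeword
of `C_E` and all `2^m` coordinates sum to zero. -/
def CEbar (m e : ℕ) (α : GaloisField 2 m) : Set (Fin (2 ^ m) → ZMod 2) :=
  {c | (fun i : Fin (2 ^ m - 1) => c (Fin.castLE (Nat.sub_le _ _) i)) ∈ CE m e α ∧
       ∑ i, c i = 0}

/-- The dual of a set of vectors over a commutative ring, as a submodule. -/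
def dualCode {n : ℕ} {F : Type*} [CommRing F] (C : Set (Fin n → F)) :
    Submodule F (Fin n → F) where
  carrier := {y | ∀ c ∈ C, ∑ i, y i * c i = 0}
  add_mem' := by
    intro a b ha hb c hc
    have h1 := ha c hc
    have h2 := hb c hc
    simp only [Pi.add_apply, add_mul, Finset.sum_add_distrib, h1, h2, add_zero]
  zero_mem' := by intro c hc; simp
  smul_mem' := by
    intro r a ha c hc
    have h1 := ha c hc
    simp only [Pi.smul_apply, smul_eq_mul, mul_assoc, ← Finset.mul_sum, h1, mul_zero]

set_option linter.unusedSectionVars false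

def chi2 (c : ZMod 2) : ℤ := if c = 0 then 1 else -1
lemma chi2_add (a b : ZMod 2) : chi2 (a+b) = chi2 a * chi2 b := by
  revert a b; decide
lemma zmod2_add_self (a : ZMod 2) : a + a = 0 := by revert a; decide
lemma chi2_eq (a : ZMod 2) : chi2 a = 1 ∨ chi2 a = -1 := by revert a; decide

lemma sum_chi2_hom {G : Type*} [AddCommGroup G] [Fintype G] (g : G → ZMod 2)
    (hg : ∀ x y, g (x + y) = g x + g y) :
    ∑ x, chi2 (g x) = if (∀ x, g x = 0) then (Fintype.card G : ℤ) else 0 := by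
  classical
  split_ifs with h
  · simp [h, chi2]
  · push Not at h
    obtain ⟨u, hu⟩ := h
    have h1 : ∑ x, chi2 (g x) = ∑ x, chi2 (g (x + u)) :=
      (Equiv.sum_comp (Equiv.addRight u) (fun x => chi2 (g x))).symm
    have h2 : chi2 (g u) = -1 := by simp [chi2, hu]
    simp only [hg, chi2_add, h2] at h1
    rw [← Finset.sum_mul] at h1
    linarith
section
variable {F : Type*} [Field F] [Fintype F] [Algebra (ZMod 2) F]

lemma tr_nondeg (u : F) (h : ∀ x, Algebra.trace (ZMod 2) F (u * x) = 0) : u = 0 := by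
  by_contra hu
  have := (traceForm_nondegenerate (ZMod 2) F)
  apply hu
  exact this.1 u (fun x => by simpa [Algebra.traceForm_apply] using h x)

lemma tr_pow (x : F) (e : ℕ) : Algebra.trace (ZMod 2) F (x ^ (2 ^ e)) = Algebra.trace (ZMod 2) F x := by
  induction e with
  | zero => simp
  | succ n ih =>
    rw [pow_succ, pow_mul, ← ih]
    have := Algebra.trace_eq_of_algEquiv (FiniteField.frobeniusAlgEquivOfAlgebraic (ZMod 2) F) (x ^ 2 ^ n)
    simpa using this

lemma two_eq_zero_F : (2 : F) = 0 := by
  have : CharP F 2 := charP_of_injective_algebraMap (algebraMap (ZMod 2) F).injective 2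
  exact_mod_cast CharP.cast_eq_zero F 2

lemma add_pow_F (e : ℕ) (x y : F) : (x + y) ^ (2 ^ e) = x ^ (2 ^ e) + y ^ (2 ^ e) := by
  have : CharP F 2 := charP_of_injective_algebraMap (algebraMap (ZMod 2) F).injective 2
  exact add_pow_char_pow x y 2 e

lemma add_self_F (x : F) : x + x = 0 := by
  rw [← two_mul, two_eq_zero_F, zero_mul]

lemma add_eq_zero_F (x y : F) : x + y = 0 ↔ x = y := by
  constructor
  · intro h
    have := add_self_F y
    exact add_right_cancel (h.trans this.symm)
  · rintro rfl; exact add_self_F x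

lemma surj_pow_F (e : ℕ) : Function.Surjective (fun x : F => x ^ (2 ^ e)) := by
  apply Finite.surjective_of_injective
  intro x y h
  simp only at h
  have h2 : (x + y) ^ (2 ^ e) = 0 := by rw [add_pow_F, add_eq_zero_F, h]
  exact (add_eq_zero_F x y).1 (pow_eq_zero_iff (by positivity) |>.1 h2)

/-- quadratic plus linear form -/
noncomputable def ff (e : ℕ) (a b : F) (x : F) : ZMod 2 :=
  Algebra.trace (ZMod 2) F (a * x ^ (1 + 2 ^ e)) + Algebra.trace (ZMod 2) F (b * x)

/-- the polar form -/
noncomputable def BB (e : ℕ) (a : F) (x z : F) : ZMod 2 :=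
  Algebra.trace (ZMod 2) F (a * (x * z ^ (2 ^ e) + z * x ^ (2 ^ e)))

/-- the radical -/
def Rad (e : ℕ) (a : F) : AddSubgroup F where
  carrier := {z | a ^ (2 ^ e) * z ^ (2 ^ (2 * e)) = a * z}
  add_mem' := by
    intro x y hx hy
    simp only [Set.mem_ofPred_eq] at *
    rw [add_pow_F, mul_add, mul_add, hx, hy]
  zero_mem' := by simp
  neg_mem' := by
    intro x hx
    have : -x = x := by rw [neg_eq_iff_add_eq_zero]; exact add_self_F x
    rw [this]; exact hx

lemma mem_Rad (e : ℕ) (a z : F) : z ∈ Rad e a ↔ a ^ (2 ^ e) * z ^ (2 ^ (2 * e)) = a * z := Iff.rfl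

lemma ff_add (e : ℕ) (a b x z : F) : ff e a b (x + z) = ff e a b x + ff e a b z + BB e a x z := by
  have h : a * (x + z) ^ (1 + 2 ^ e) =
      a * x ^ (1 + 2 ^ e) + a * z ^ (1 + 2 ^ e) + a * (x * z ^ (2 ^ e) + z * x ^ (2 ^ e)) := by
    rw [pow_add, add_pow_F, pow_add, pow_add]; ring
  simp only [ff, BB, h, mul_add b, map_add]
  ring

lemma BB_add (e : ℕ) (a x y z : F) : BB e a (x + y) z = BB e a x z + BB e a y z := by
  simp only [BB, ← map_add, add_pow_F]
  congr 1; ring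

lemma BB_eq (e : ℕ) (a x z : F) : BB e a x z =
    Algebra.trace (ZMod 2) F ((a ^ (2 ^ e) * z ^ (2 ^ (2 * e)) + a * z) * x ^ (2 ^ e)) := by
  have h1 : Algebra.trace (ZMod 2) F (a * (x * z ^ (2 ^ e))) =
    Algebra.trace (ZMod 2) F ((a ^ (2 ^ e) * z ^ (2 ^ (2 * e))) * x ^ (2 ^ e)) := by
    rw [← tr_pow _ e]
    congr 1
    rw [mul_pow, mul_pow, ← pow_mul, ← pow_add, two_mul e]; ring
  rw [BB, mul_add, map_add, h1, ← map_add]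
  congr 1; ring

lemma BB_zero_iff (e : ℕ) (a z : F) : (∀ x, BB e a x z = 0) ↔ z ∈ Rad e a := by
  rw [mem_Rad, ← add_eq_zero_F]
  constructor
  · intro h
    apply tr_nondeg
    intro x
    obtain ⟨y, rfl⟩ := surj_pow_F e x
    rw [← BB_eq]; exact h y
  · intro h x
    rw [BB_eq, h]; simp

/-- Weil-type sum -/
noncomputable def SS (e : ℕ) (a b : F) : ℤ := ∑ x, chi2 (ff e a b x)

open Classical in
lemma SS_sq (e : ℕ) (a b : F) : SS e a b ^ 2 =
    Fintype.card F * ∑ z : Rad e a, chi2 (ff e a b z) := by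
  have h1 : SS e a b ^ 2 = ∑ z, ∑ x, chi2 (ff e a b x) * chi2 (ff e a b (x + z)) := by
    rw [pow_two, SS, Finset.sum_mul_sum]
    rw [Finset.sum_comm (s := univ (α := F)) (f := fun z x => chi2 (ff e a b x) * chi2 (ff e a b (x + z)))]
    refine Finset.sum_congr rfl fun x _ => ?_
    exact (Equiv.sum_comp (Equiv.addLeft x) (fun y => chi2 (ff e a b x) * chi2 (ff e a b y))).symm
  have h2 : ∀ z, ∑ x, chi2 (ff e a b x) * chi2 (ff e a b (x + z)) =
      if z ∈ Rad e a then Fintype.card F * chi2 (ff e a b z) else 0 := by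
    intro z
    have : ∀ x, chi2 (ff e a b x) * chi2 (ff e a b (x + z)) = chi2 (ff e a b z) * chi2 (BB e a x z) := by
      intro x
      rw [← chi2_add, ← chi2_add, ff_add]
      congr 1
      rw [← add_assoc, ← add_assoc, zmod2_add_self, zero_add]
    simp only [this]
    rw [← Finset.mul_sum, sum_chi2_hom _ (fun x y => BB_add e a x y z)]
    simp only [BB_zero_iff]
    split_ifs <;> ring
  rw [h1]
  simp only [h2]
  rw [← Finset.sum_filter, Finset.mul_sum]
  exact Finset.sum_subtype _ (by simp) _

lemma SS_sq_cases (e : ℕ) (a b : F) : SS e a b ^ 2 = 0 ∨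
    SS e a b ^ 2 = Fintype.card F * Nat.card (Rad e a) := by
  classical
  rw [SS_sq]
  have := sum_chi2_hom (G := Rad e a) (fun z => ff e a b z) (by
    intro x y
    simp only [AddSubgroup.coe_add]
    rw [ff_add, (BB_zero_iff e a y).2 y.2, add_zero])
  rw [this, Nat.card_eq_fintype_card]
  split_ifs
  · right; rfl
  · left; simp

lemma sum_SS_sq (e : ℕ) (a : F) : ∑ b, SS e a b ^ 2 = (Fintype.card F : ℤ) ^ 2 := by
  classical
  simp only [SS_sq]
  rw [← Finset.mul_sum, Finset.sum_comm, pow_two]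
  congr 1
  have h : ∀ z : Rad e a, ∑ b, chi2 (ff e a b z) = if z = 0 then (Fintype.card F : ℤ) else 0 := by
    intro z
    simp only [ff, chi2_add]
    rw [← Finset.mul_sum, sum_chi2_hom]
    · by_cases hz : z = 0
      · subst hz; simp [chi2]
      · rw [if_neg, if_neg hz, mul_zero]
        intro h
        apply hz
        ext
        apply tr_nondeg
        intro x; rw [mul_comm]; exact h x
    · intro x y; rw [add_mul, map_add]
  simp [h]

lemma card_SS (e : ℕ) (a : F) :
    Nat.card {b : F // SS e a b ^ 2 = Fintype.card F * Nat.card (Rad e a)} * Nat.card (Rad e a) =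
      Fintype.card F := by
  classical
  have h := sum_SS_sq e a
  have h0 : (0 : ℤ) < Fintype.card F := by exact_mod_cast Fintype.card_pos
  have h2 : ∀ b, SS e a b ^ 2 = if SS e a b ^ 2 = Fintype.card F * Nat.card (Rad e a) then
     (Fintype.card F * Nat.card (Rad e a) : ℤ) else 0 := by
    intro b
    split_ifs with h
    · exact h
    · exact (SS_sq_cases e a b).resolve_right h
  rw [Finset.sum_congr rfl (fun b _ => h2 b), ← Finset.sum_filter, Finset.sum_const, nsmul_eq_mul] at h
  rw [Nat.card_eq_fintype_card (α := {b : F // _}), Fintype.card_subtype]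
  have : (Fintype.card F : ℤ) * (((Finset.univ.filter fun b => SS e a b ^ 2 = Fintype.card F * Nat.card (Rad e a)).card : ℤ) * Nat.card (Rad e a)) = Fintype.card F * Fintype.card F := by
    rw [← pow_two, ← h]; ring
  exact_mod_cast mul_left_cancel₀ h0.ne' this

lemma gcd_two_mul_aux (m e : ℕ) (he1 : 1 ≤ e) (heven : Even (m / Nat.gcd m e)) :
    Nat.gcd m (2 * e) = 2 * Nat.gcd m e := by
  have hd : 0 < Nat.gcd m e := Nat.gcd_pos_of_pos_right _ he1
  obtain ⟨k, hk⟩ := heven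
  have h1 : m = Nat.gcd m e * (k + k) := by
    rw [← hk, Nat.mul_div_cancel' (Nat.gcd_dvd_left m e)]
  have hc := Nat.coprime_div_gcd_div_gcd hd
  rw [hk] at hc
  have h2 : e = Nat.gcd m e * (e / Nat.gcd m e) :=
    (Nat.mul_div_cancel' (Nat.gcd_dvd_right m e)).symm
  have hc' : Nat.gcd k (e / Nat.gcd m e) = 1 :=
    Nat.Coprime.coprime_dvd_left ⟨2, by ring⟩ hc
  generalize Nat.gcd m e = d at *
  generalize e / d = f at *
  subst h2
  rw [h1]
  have : d * (k + k) = (2 * d) * k := by ring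
  rw [this, ← mul_assoc, Nat.gcd_mul_left, hc', mul_one]

lemma card_pow_fiber (k : ℕ) (c : Fˣ) :
    Nat.card {z : Fˣ // z ^ k = c} = 0 ∨
    Nat.card {z : Fˣ // z ^ k = c} = Nat.gcd (Fintype.card F - 1) k := by
  classical
  by_cases h : ∃ z : Fˣ, z ^ k = c
  · right
    obtain ⟨z₀, hz₀⟩ := h
    have h1 := IsCyclic.card_powMonoidHom_ker (G := Fˣ) k
    rw [Nat.card_eq_fintype_card (α := Fˣ), Fintype.card_units] at h1
    rw [← h1]
    refine Nat.card_congr ⟨fun z => ⟨z.1 * z₀⁻¹, ?_⟩, fun z => ⟨z.1 * z₀, ?_⟩, ?_, ?_⟩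
    · rw [MonoidHom.mem_ker, powMonoidHom_apply, mul_pow, z.2, inv_pow, hz₀, mul_inv_cancel]
    · have := z.2
      rw [MonoidHom.mem_ker, powMonoidHom_apply] at this
      rw [mul_pow, this, hz₀, one_mul]
    · intro z; ext; simp
    · intro z; ext; simp
  · left
    rw [Nat.card_eq_zero]
    left
    exact ⟨fun z => h ⟨z.1, z.2⟩⟩

lemma unit_mem_Rad (e : ℕ) (a z : Fˣ) :
    (z : F) ∈ Rad e (a : F) ↔ (a * z ^ (2 ^ e + 1)) ^ (2 ^ e - 1) = 1 := by
  rw [mem_Rad]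
  have h : a ^ (2 ^ e) * z ^ (2 ^ (2 * e)) = (a * z ^ (2 ^ e + 1)) ^ (2 ^ e - 1) * (a * z) := by
    have h1 : 2 ^ e = (2 ^ e - 1) + 1 := (Nat.sub_add_cancel Nat.one_le_two_pow).symm
    have h2 : 2 ^ (2 * e) = (2 ^ e + 1) * (2 ^ e - 1) + 1 := by
      rw [two_mul, pow_add]
      generalize 2 ^ e - 1 = t at *
      rw [h1]; ring
    rw [mul_pow, ← pow_mul, h2]
    generalize 2 ^ e - 1 = t at *
    rw [h1, pow_succ, pow_succ z, mul_mul_mul_comm]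
  constructor
  · intro h3
    have h4 : a ^ (2 ^ e) * z ^ (2 ^ (2 * e)) = a * z := by ext; push_cast; exact h3
    rw [h] at h4
    simpa using h4
  · intro h3
    rw [h3, one_mul] at h
    have := congrArg (Units.val) h
    push_cast at this
    exact this

lemma card_Rad (e : ℕ) (a : Fˣ) : Nat.card (Rad e (a : F)) =
    1 + Nat.card {z : Fˣ // (a * z ^ (2 ^ e + 1)) ^ (2 ^ e - 1) = 1} := by
  classical
  have : Nat.card (Option {z : Fˣ // (a * z ^ (2 ^ e + 1)) ^ (2 ^ e - 1) = 1}) =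
      1 + Nat.card {z : Fˣ // (a * z ^ (2 ^ e + 1)) ^ (2 ^ e - 1) = 1} := by
    rw [Finite.card_option, add_comm]
  rw [← this]
  symm
  refine Nat.card_congr (Equiv.ofBijective
    (fun o => o.elim (0 : Rad e (a : F)) (fun z => ⟨(z.1 : F), (unit_mem_Rad e a z.1).2 z.2⟩)) ⟨?_, ?_⟩)
  · intro x y h
    rcases x with _ | x <;> rcases y with _ | y
    · rfl
    · have := congrArg Subtype.val h
      simp at this
      exact absurd this.symm (Units.ne_zero y.1)
    · have := congrArg Subtype.val h
      simp at this
    · have := congrArg Subtype.val h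
      simp only [Option.elim] at this
      congr 1
      ext; exact this
  · rintro ⟨z, hz⟩
    by_cases h0 : z = 0
    · refine ⟨none, ?_⟩
      subst h0; rfl
    · exact ⟨some ⟨Units.mk0 z h0, (unit_mem_Rad e a _).1 hz⟩, rfl⟩

lemma card_Rad_cases (m e : ℕ) (hF : Fintype.card F = 2 ^ m) (he1 : 1 ≤ e)
    (heven : Even (m / Nat.gcd m e)) (a : Fˣ) :
    Nat.card (Rad e (a : F)) = 1 ∨ Nat.card (Rad e (a : F)) = 2 ^ (2 * Nat.gcd m e) := by
  rw [card_Rad]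
  have hset : ∀ z : Fˣ, (a * z ^ (2 ^ e + 1)) ^ (2 ^ e - 1) = 1 ↔
      z ^ (2 ^ (2 * e) - 1) = (a ^ (2 ^ e - 1))⁻¹ := by
    intro z
    have h2 : 2 ^ (2 * e) - 1 = (2 ^ e + 1) * (2 ^ e - 1) := by
      rw [two_mul, pow_add, ← Nat.sq_sub_sq _ 1, pow_two]
    rw [h2, mul_pow, ← pow_mul, eq_inv_iff_mul_eq_one, mul_comm]
  simp only [hset]
  rcases card_pow_fiber (2 ^ (2 * e) - 1) (a ^ (2 ^ e - 1))⁻¹ with h | h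
  · left; rw [h]
  · right; rw [h, hF, Nat.pow_sub_one_gcd_pow_sub_one, gcd_two_mul_aux m e he1 heven]
    exact Nat.add_sub_cancel' Nat.one_le_two_pow

/-- number of units `a` whose radical is nontrivial -/
lemma count_Rad (m e : ℕ) (hF : Fintype.card F = 2 ^ m) (he1 : 1 ≤ e)
    (heven : Even (m / Nat.gcd m e)) :
    Nat.card {a : Fˣ // Nat.card (Rad e (a : F)) = 2 ^ (2 * Nat.gcd m e)} * (2 ^ Nat.gcd m e + 1) =
      2 ^ m - 1 := by
  classical
  set d := Nat.gcd m e with hd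
  have hd0 : 0 < d := Nat.gcd_pos_of_pos_right _ he1
  have hD : 2 ≤ 2 ^ d := by
    calc 2 = 2 ^ 1 := rfl
      _ ≤ 2 ^ d := Nat.pow_le_pow_right (by norm_num) hd0
  have h2 : 2 ^ (2 * d) - 1 = (2 ^ d + 1) * (2 ^ d - 1) := by
      rw [two_mul, pow_add, ← Nat.sq_sub_sq _ 1, pow_two]
  have hDD : 2 ^ (2 * d) ≠ 1 := by
    intro h
    rw [h] at h2
    have : 0 < (2 ^ d + 1) * (2 ^ d - 1) := Nat.mul_pos (by omega) (by omega)
    omega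
  -- double counting
  have hA : Nat.card (Σ a : Fˣ, {z : Fˣ // (a * z ^ (2 ^ e + 1)) ^ (2 ^ e - 1) = 1}) =
      Nat.card {a : Fˣ // Nat.card (Rad e (a : F)) = 2 ^ (2 * d)} * (2 ^ (2 * d) - 1) := by
    rw [Nat.card_sigma]
    have : ∀ a : Fˣ, Nat.card {z : Fˣ // (a * z ^ (2 ^ e + 1)) ^ (2 ^ e - 1) = 1} =
        if Nat.card (Rad e (a : F)) = 2 ^ (2 * d) then 2 ^ (2 * d) - 1 else 0 := by
      intro a
      have h1 := card_Rad e a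
      rcases card_Rad_cases m e hF he1 heven a with h | h
      · rw [if_neg]
        · omega
        · rw [h]; exact hDD.symm
      · rw [← hd] at h
        rw [if_pos h]; omega
    simp only [this]
    rw [← Finset.sum_filter, Finset.sum_const, smul_eq_mul, Nat.card_eq_fintype_card (α := {a : Fˣ // _}),
      Fintype.card_subtype]
  have hB : Nat.card (Σ a : Fˣ, {z : Fˣ // (a * z ^ (2 ^ e + 1)) ^ (2 ^ e - 1) = 1}) =
      (2 ^ m - 1) * (2 ^ d - 1) := by
    have : Nat.card (Σ a : Fˣ, {z : Fˣ // (a * z ^ (2 ^ e + 1)) ^ (2 ^ e - 1) = 1}) =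
        Nat.card (Fˣ × (powMonoidHom (2 ^ e - 1) : Fˣ →* Fˣ).ker) := by
      refine Nat.card_congr ⟨fun p => ⟨p.2.1, p.1 * p.2.1 ^ (2 ^ e + 1), p.2.2⟩,
        fun p => ⟨p.2.1 * (p.1 ^ (2 ^ e + 1))⁻¹, p.1, ?_⟩, ?_, ?_⟩
      · have := p.2.2
        rw [MonoidHom.mem_ker, powMonoidHom_apply] at this
        simpa using this
      · rintro ⟨a, z, h⟩
        have : a * z ^ (2 ^ e + 1) * (z ^ (2 ^ e + 1))⁻¹ = a := by simp
        simp only [Sigma.mk.injEq]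
        refine ⟨this, ?_⟩
        congr 1
        · simp
        · exact proof_irrel_heq _ _
      · rintro ⟨z, w, h⟩
        simp
    rw [this, Nat.card_prod, IsCyclic.card_powMonoidHom_ker, Nat.card_eq_fintype_card,
      Fintype.card_units, hF, Nat.pow_sub_one_gcd_pow_sub_one]
  rw [hA, h2] at hB
  have h3 : 0 < 2 ^ d - 1 := by omega
  apply Nat.eq_of_mul_eq_mul_right h3
  rw [← hB]; ring

/-- the functions of the (dual) code -/
noncomputable def gg (e : ℕ) (p : F × F × ZMod 2) (x : F) : ZMod 2 := ff e p.1 p.2.1 x + p.2.2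

lemma gg_add (e : ℕ) (p p' : F × F × ZMod 2) (x : F) :
    gg e (p + p') x = gg e p x + gg e p' x := by
  simp only [gg, ff, Prod.fst_add, Prod.snd_add, add_mul, map_add]
  ring

lemma gg_affine (e : ℕ) (p : F × F × ZMod 2) (u v : F) :
    ∃ p' : F × F × ZMod 2, ∀ x, gg e p' x = gg e p (u * x + v) := by
  obtain ⟨a, b, c⟩ := p
  obtain ⟨y, hy⟩ := surj_pow_F e (a * v * u ^ (2 ^ e))
  simp only at hy
  refine ⟨(a * u ^ (1 + 2 ^ e), a * u * v ^ (2 ^ e) + y + b * u, c + ff e a b v), fun x => ?_⟩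
  have h1 : BB e a (u * x) v = Algebra.trace (ZMod 2) F ((a * u * v ^ (2 ^ e) + y) * x) := by
    rw [BB, add_mul, mul_add, map_add, map_add, ← tr_pow (y * x) e, mul_pow y, hy]
    congr 2 <;> ring
  simp only [gg, ff_add, h1]
  have h2 : ff e a b (u * x) = ff e (a * u ^ (1 + 2 ^ e)) (b * u) x := by
    simp only [ff]
    congr 2 <;> ring
  rw [h2]
  simp only [ff, add_mul, map_add]
  ring

lemma sum_chi_gg [DecidableEq F] (e : ℕ) (p : F × F × ZMod 2) :
    (Fintype.card F : ℤ) - 2 * hammingNorm (gg e p) = chi2 p.2.2 * SS e p.1 p.2.1 := by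
  have h1 : chi2 p.2.2 * SS e p.1 p.2.1 = ∑ x, chi2 (gg e p x) := by
    rw [SS, Finset.mul_sum]
    refine Finset.sum_congr rfl fun x _ => ?_
    rw [gg, chi2_add, mul_comm]
  have h2 : ∀ x, chi2 (gg e p x) = 1 - 2 * (if gg e p x ≠ 0 then 1 else 0) := by
    intro x
    by_cases h : gg e p x = 0 <;> simp [chi2, h]
  rw [h1]
  simp only [h2]
  rw [Finset.sum_sub_distrib, ← Finset.mul_sum, Finset.sum_boole]
  simp [hammingNorm]

lemma card_Rad_zero (e : ℕ) : Nat.card (Rad e (0 : F)) = Fintype.card F := by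
  have : Rad e (0 : F) = ⊤ := by
    ext z
    rw [mem_Rad]
    simp
  rw [this]
  simp

lemma Rad_cases (m e : ℕ) (hF : Fintype.card F = 2 ^ m) (he1 : 1 ≤ e)
    (heven : Even (m / Nat.gcd m e)) (a : F) :
    (a = 0 ∧ Nat.card (Rad e a) = 2 ^ m) ∨
    (a ≠ 0 ∧ (Nat.card (Rad e a) = 1 ∨ Nat.card (Rad e a) = 2 ^ (2 * Nat.gcd m e))) := by
  by_cases h : a = 0
  · left; subst h; exact ⟨rfl, by rw [card_Rad_zero, hF]⟩
  · right; exact ⟨h, card_Rad_cases m e hF he1 heven (Units.mk0 a h)⟩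

lemma gg_injective (m e : ℕ) (hF : Fintype.card F = 2 ^ m) (he1 : 1 ≤ e) (he : 2 * e < m)
    (heven : Even (m / Nat.gcd m e)) : Function.Injective (gg (F := F) e) := by
  classical
  have hlt : 2 * Nat.gcd m e < m := by
    have := Nat.le_of_dvd he1 (Nat.gcd_dvd_right m e)
    omega
  have hlt2 : 2 ^ (2 * Nat.gcd m e) < 2 ^ m := Nat.pow_lt_pow_right (by norm_num) hlt
  have hlt3 : 1 ≤ 2 ^ (2 * Nat.gcd m e) := Nat.one_le_two_pow
  have key : ∀ p : F × F × ZMod 2, (∀ x, gg e p x = 0) → p = 0 := by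
    rintro ⟨a, b, c⟩ h
    have h1 := sum_chi_gg e (a, b, c)
    have h2 : gg e (a, b, c) = 0 := funext h
    rw [h2, hammingNorm_zero] at h1
    simp only [Nat.cast_zero, mul_zero, sub_zero] at h1
    have hq : (0 : ℤ) < Fintype.card F := by exact_mod_cast Fintype.card_pos
    have h3 : SS e a b ^ 2 = (Fintype.card F : ℤ) ^ 2 := by
      rw [h1]
      rcases chi2_eq c with h | h <;> rw [h] <;> ring
    have h4 : Nat.card (Rad e a) = Fintype.card F := by
      rcases SS_sq_cases e a b with h | h
      · rw [h3] at h
        have := pow_pos hq 2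
        omega
      · rw [h3, pow_two] at h
        exact_mod_cast (mul_left_cancel₀ hq.ne' h).symm
    have ha : a = 0 := by
      rw [hF] at h4
      rcases Rad_cases m e hF he1 heven a with h | ⟨_, h | h⟩
      · exact h.1
      · omega
      · omega
    have hc : c = 0 := by
      have := h 0
      simpa [gg, ff] using this
    subst ha hc
    have hb : b = 0 := by
      apply tr_nondeg
      intro x
      simpa [gg, ff] using h x
    subst hb
    rfl
  intro p p' h
  have h0 : p + p' = 0 := by
    apply key
    intro x
    rw [gg_add, h, zmod2_add_self]
  have h1 : p' + p' = 0 := by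
    ext
    · exact add_self_F _
    · exact add_self_F _
    · exact zmod2_add_self _
  exact add_right_cancel (h0.trans h1.symm)

open Classical in
lemma card_fin3 (e : ℕ) (w : ℤ) :
    Nat.card {p : F × F × ZMod 2 // chi2 p.2.2 * SS e p.1 p.2.1 = w} =
      ∑ a : F, ∑ b : F, ∑ c : ZMod 2, if chi2 c * SS e a b = w then 1 else 0 := by
  rw [Nat.card_eq_fintype_card, Fintype.card_subtype, Finset.card_filter, Fintype.sum_prod_type]
  refine Finset.sum_congr rfl fun a _ => ?_
  rw [Fintype.sum_prod_type]

open Classical in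
lemma count_W_ne (e ρ : ℕ) (hρ : 0 < ρ) (w : ℤ) (hw : w ^ 2 = Fintype.card F * ρ) :
    Nat.card {p : F × F × ZMod 2 // chi2 p.2.2 * SS e p.1 p.2.1 = w} * ρ =
      Nat.card {a : F // Nat.card (Rad e a) = ρ} * Fintype.card F := by
  have hq : (0 : ℤ) < Fintype.card F := by exact_mod_cast Fintype.card_pos
  have hw0 : w ≠ 0 := by
    rintro rfl
    have : (0 : ℤ) < Fintype.card F * ρ := by positivity
    rw [← hw] at this
    simp at this
  rw [card_fin3]
  have h1 : ∀ a b : F, (∑ c : ZMod 2, if chi2 c * SS e a b = w then 1 else 0) =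
      if SS e a b ^ 2 = Fintype.card F * ρ then 1 else 0 := by
    intro a b
    rw [← hw]
    have : (∑ c : ZMod 2, if chi2 c * SS e a b = w then 1 else 0) =
      (if SS e a b = w then 1 else 0) + (if -SS e a b = w then 1 else 0) := by
      rw [show (univ : Finset (ZMod 2)) = {0, 1} from rfl, Finset.sum_pair (by decide)]
      simp [chi2]
    rw [this]
    simp only [sq_eq_sq_iff_eq_or_eq_neg]
    by_cases hA : SS e a b = w
    · have : ¬ (-SS e a b = w) := by omega
      rw [if_pos hA, if_neg this, if_pos (Or.inl hA)]
    · by_cases hB : SS e a b = -w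
      · have : (-SS e a b = w) := by omega
        rw [if_neg hA, if_pos this, if_pos (Or.inr hB)]
      · have : ¬ (-SS e a b = w) := by omega
        rw [if_neg hA, if_neg this, if_neg (by tauto)]
  simp only [h1]
  rw [Finset.sum_mul]
  have h2 : ∀ a : F, (∑ b : F, if SS e a b ^ 2 = Fintype.card F * ρ then 1 else 0) * ρ =
      if Nat.card (Rad e a) = ρ then Fintype.card F else 0 := by
    intro a
    split_ifs with h
    · have := card_SS e a
      rw [h, Nat.card_eq_fintype_card, Fintype.card_subtype, Finset.card_filter] at this
      exact this
    · rw [Finset.sum_eq_zero, zero_mul]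
      intro b _
      rw [if_neg]
      intro h3
      rcases SS_sq_cases e a b with h4 | h4
      · rw [h4] at h3
        have : (0 : ℤ) < Fintype.card F * ρ := by positivity
        omega
      · rw [h3] at h4
        apply h
        exact_mod_cast (mul_left_cancel₀ hq.ne' h4).symm
  simp only [h2]
  rw [← Finset.sum_filter, Finset.sum_const, smul_eq_mul, Nat.card_eq_fintype_card (α := {a : F // _}),
      Fintype.card_subtype]

open Classical in
lemma count_W_zero (m e q' : ℕ) (hF : Fintype.card F = 2 ^ m) (he1 : 1 ≤ e) (he : 2 * e < m)
    (heven : Even (m / Nat.gcd m e)) (hq' : 2 ^ m = q' * 2 ^ (2 * Nat.gcd m e)) :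
    Nat.card {p : F × F × ZMod 2 // chi2 p.2.2 * SS e p.1 p.2.1 = 0} =
      2 * (Nat.card {a : F // Nat.card (Rad e a) = 2 ^ (2 * Nat.gcd m e)} * (2 ^ m - q') + (2 ^ m - 1)) := by
  have hlt : 2 * Nat.gcd m e < m := by
    have := Nat.le_of_dvd he1 (Nat.gcd_dvd_right m e)
    omega
  have hd0 : 0 < Nat.gcd m e := Nat.gcd_pos_of_pos_right _ he1
  have hlt2 : 2 ^ (2 * Nat.gcd m e) < 2 ^ m := Nat.pow_lt_pow_right (by norm_num) hlt
  have hlt3 : 1 < 2 ^ (2 * Nat.gcd m e) := Nat.one_lt_two_pow (by omega)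
  rw [card_fin3]
  have h1 : ∀ a b : F, (∑ c : ZMod 2, if chi2 c * SS e a b = 0 then 1 else 0) =
      2 * (1 - if SS e a b ^ 2 = Fintype.card F * Nat.card (Rad e a) then 1 else 0) := by
    intro a b
    have hpos : (0 : ℤ) < Fintype.card F * Nat.card (Rad e a) := by
      have h1 : 0 < Fintype.card F := Fintype.card_pos
      have h2 : 0 < Nat.card (Rad e a) := Nat.card_pos
      positivity
    rw [show (univ : Finset (ZMod 2)) = {0, 1} from rfl, Finset.sum_pair (by decide)]
    rcases SS_sq_cases e a b with h | h
    · have h0 : SS e a b = 0 := by simpa using h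
      rw [h, if_neg hpos.ne]
      simp [h0]
    · have h0 : SS e a b ≠ 0 := by
        intro h0
        rw [h0] at h
        simp only [ne_eq, OfNat.ofNat_ne_zero, not_false_eq_true, zero_pow] at h
        omega
      rw [if_pos h]
      simp [chi2, h0]
  simp only [h1]
  have h2 : ∀ a : F, (∑ b : F, 2 * (1 - if SS e a b ^ 2 = Fintype.card F * Nat.card (Rad e a) then 1 else 0)) =
      (if Nat.card (Rad e a) = 2 ^ (2 * Nat.gcd m e) then 2 * (2 ^ m - q') else 0) +
      (if a = 0 then 2 * (2 ^ m - 1) else 0) := by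
    intro a
    rw [← Finset.mul_sum, Finset.sum_tsub_distrib _ (fun b _ => by split_ifs <;> omega)]
    have h3 := card_SS e a
    rw [Nat.card_eq_fintype_card (α := {b : F // _}), Fintype.card_subtype, Finset.card_filter] at h3
    generalize (∑ b : F, if SS e a b ^ 2 = Fintype.card F * Nat.card (Rad e a) then 1 else 0) = t at *
    simp only [Finset.sum_const, Finset.card_univ, smul_eq_mul, mul_one]
    rw [hF] at h3 ⊢
    rcases Rad_cases m e hF he1 heven a with ⟨h, h4⟩ | ⟨h, h4 | h4⟩
    · rw [h4] at h3 ⊢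
      rw [if_neg hlt2.ne', if_pos h, zero_add]
      have : t = 1 := by
        apply Nat.eq_of_mul_eq_mul_right (show 0 < 2 ^ m by positivity)
        rw [h3, one_mul]
      rw [this]
    · rw [h4] at h3 ⊢
      rw [if_neg hlt3.ne, if_neg h, ← h3]
      simp
    · rw [h4] at h3 ⊢
      rw [if_pos rfl, if_neg h, add_zero]
      have : t = q' := by
        apply Nat.eq_of_mul_eq_mul_right (show 0 < 2 ^ (2 * Nat.gcd m e) by positivity)
        rw [h3, hq']
      rw [this]
  simp only [h2]
  rw [Finset.sum_add_distrib, ← Finset.sum_filter, Finset.sum_const, smul_eq_mul,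
    Nat.card_eq_fintype_card (α := {a : F // _}), Fintype.card_subtype]
  simp only [Finset.sum_ite_eq', Finset.mem_univ, if_true]
  ring

lemma count_R (m e : ℕ) (hF : Fintype.card F = 2 ^ m) (he1 : 1 ≤ e) (he : 2 * e < m)
    (heven : Even (m / Nat.gcd m e)) :
    Nat.card {a : F // Nat.card (Rad e a) = 2 ^ (2 * Nat.gcd m e)} * (2 ^ Nat.gcd m e + 1) =
      2 ^ m - 1 := by
  have hlt : 2 * Nat.gcd m e < m := by
    have := Nat.le_of_dvd he1 (Nat.gcd_dvd_right m e)
    omega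
  have hlt2 : 2 ^ (2 * Nat.gcd m e) < 2 ^ m := Nat.pow_lt_pow_right (by norm_num) hlt
  rw [← count_Rad (F := F) m e hF he1 heven]
  congr 1
  symm
  refine Nat.card_congr ⟨fun a => ⟨a.1, a.2⟩, fun a => ⟨Units.mk0 a.1 ?_, a.2⟩, ?_, ?_⟩
  · rintro h
    have := a.2
    rw [h, card_Rad_zero, hF] at this
    omega
  · intro a; ext; rfl
  · intro a; rfl

lemma count_1 (m e : ℕ) (hF : Fintype.card F = 2 ^ m) (he1 : 1 ≤ e) (he : 2 * e < m)
    (heven : Even (m / Nat.gcd m e)) :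
    Nat.card {a : F // Nat.card (Rad e a) = 1} * (2 ^ Nat.gcd m e + 1) =
      (2 ^ m - 1) * 2 ^ Nat.gcd m e := by
  classical
  have hlt : 2 * Nat.gcd m e < m := by
    have := Nat.le_of_dvd he1 (Nat.gcd_dvd_right m e)
    omega
  have hd0 : 0 < Nat.gcd m e := Nat.gcd_pos_of_pos_right _ he1
  have hlt2 : 2 ^ (2 * Nat.gcd m e) < 2 ^ m := Nat.pow_lt_pow_right (by norm_num) hlt
  have hlt3 : 1 < 2 ^ (2 * Nat.gcd m e) := Nat.one_lt_two_pow (by omega)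
  have h := count_R (F := F) m e hF he1 he heven
  have hs : Nat.card {a : F // Nat.card (Rad e a) = 1} +
      Nat.card {a : F // Nat.card (Rad e a) = 2 ^ (2 * Nat.gcd m e)} + 1 = 2 ^ m := by
    have : ∑ a : F, ((if Nat.card (Rad e a) = 1 then 1 else 0) +
      (if Nat.card (Rad e a) = 2 ^ (2 * Nat.gcd m e) then 1 else 0) + (if a = 0 then 1 else 0)) = ∑ a : F, 1 := by
      refine Finset.sum_congr rfl fun a _ => ?_
      rcases Rad_cases m e hF he1 heven a with ⟨h, h4⟩ | ⟨h, h4 | h4⟩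
      · rw [h4, if_neg (by omega), if_neg (by omega), if_pos h]
      · rw [h4, if_pos rfl, if_neg (by omega), if_neg h]
      · rw [h4, if_neg (by omega), if_pos rfl, if_neg h]
    rw [Finset.sum_add_distrib, Finset.sum_add_distrib, ← Finset.card_filter, ← Finset.card_filter] at this
    simp only [Finset.sum_ite_eq', Finset.mem_univ, if_true, Finset.sum_const, Finset.card_univ, hF,
      smul_eq_mul, mul_one] at this
    rw [Nat.card_eq_fintype_card (α := {a : F // _}), Fintype.card_subtype,
      Nat.card_eq_fintype_card (α := {a : F // _}), Fintype.card_subtype]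
    exact this
  generalize Nat.card {a : F // Nat.card (Rad e a) = 2 ^ (2 * Nat.gcd m e)} = N at *
  generalize Nat.card {a : F // Nat.card (Rad e a) = 1} = M at *
  have h5 : 2 ^ m - 1 = M + N := by omega
  rw [h5] at h ⊢
  nlinarith

end

lemma design_count {X : Type*} [Fintype X] [DecidableEq X] (𝓓 : Finset (X → ZMod 2)) (k lam : ℕ)
    (hk : ∀ f ∈ 𝓓, hammingNorm f = k)
    (hlam : ∀ s t, s ≠ t → (𝓓.filter (fun f => f s ≠ 0 ∧ f t ≠ 0)).card = lam) :
    Fintype.card X * (Fintype.card X - 1) * lam = 𝓓.card * (k * (k - 1)) := by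
  have h := Finset.sum_card_bipartiteAbove_eq_sum_card_bipartiteBelow
    (s := (univ : Finset X).offDiag) (t := 𝓓)
    (fun (p : X × X) (f : X → ZMod 2) => f p.1 ≠ 0 ∧ f p.2 ≠ 0)
  have h1 : ∀ p ∈ (univ : Finset X).offDiag,
      (bipartiteAbove (fun (p : X × X) (f : X → ZMod 2) => f p.1 ≠ 0 ∧ f p.2 ≠ 0) 𝓓 p).card = lam := by
    intro p hp
    rw [Finset.mem_offDiag] at hp
    exact hlam p.1 p.2 hp.2.2
  have h2 : ∀ f ∈ 𝓓,
      (bipartiteBelow (fun (p : X × X) (f : X → ZMod 2) => f p.1 ≠ 0 ∧ f p.2 ≠ 0)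
        (univ : Finset X).offDiag f).card = k * (k - 1) := by
    intro f hf
    have : bipartiteBelow (fun (p : X × X) (f : X → ZMod 2) => f p.1 ≠ 0 ∧ f p.2 ≠ 0)
        (univ : Finset X).offDiag f = (univ.filter (fun x => f x ≠ 0)).offDiag := by
      ext p
      simp only [mem_bipartiteBelow, mem_offDiag, mem_filter, mem_univ, true_and]
      tauto
    rw [this, Finset.offDiag_card]
    have hh := hk f hf
    rw [hammingNorm] at hh
    rw [hh, Nat.mul_sub_one]
  rw [Finset.sum_congr rfl h1, Finset.sum_congr rfl h2, Finset.sum_const, Finset.sum_const,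
    smul_eq_mul, smul_eq_mul, Finset.offDiag_card, Finset.card_univ, ← Nat.mul_sub_one] at h
  exact h

section
variable {F : Type*} [Field F] [Fintype F] [Algebra (ZMod 2) F] [DecidableEq F]

/-- the weight `k` functions of the code -/
noncomputable def DD (F : Type*) [Field F] [Fintype F] [Algebra (ZMod 2) F] [DecidableEq F]
    (e k : ℕ) : Finset (F → ZMod 2) := by
  classical
  exact univ.filter (fun f => f ∈ Set.range (gg (F := F) e) ∧ hammingNorm f = k)

lemma mem_DD (e k : ℕ) (f : F → ZMod 2) :
    f ∈ DD F e k ↔ f ∈ Set.range (gg (F := F) e) ∧ hammingNorm f = k := by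
  simp [DD]

lemma DD_affine (e k : ℕ) (u v : F) (hu : u ≠ 0) (f : F → ZMod 2) (hf : f ∈ DD F e k) :
    (fun x => f (u * x + v)) ∈ DD F e k := by
  rw [mem_DD] at *
  obtain ⟨⟨p, rfl⟩, h⟩ := hf
  obtain ⟨p', hp'⟩ := gg_affine e p u v
  refine ⟨⟨p', funext hp'⟩, ?_⟩
  rw [← h, hammingNorm, hammingNorm]
  refine Finset.card_bij (fun x _ => u * x + v) ?_ ?_ ?_
  · intro x hx; simpa using hx
  · intro x _ y _ hxy
    simpa [hu] using hxy
  · intro y hy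
    refine ⟨u⁻¹ * (y - v), ?_, ?_⟩
    · simp only [mem_filter, mem_univ, true_and] at hy ⊢
      rw [mul_inv_cancel_left₀ hu, sub_add_cancel]; exact hy
    · rw [mul_inv_cancel_left₀ hu, sub_add_cancel]

lemma DD_le (e k : ℕ) (s t s' t' : F) (h : s ≠ t) (h' : s' ≠ t') :
    ((DD F e k).filter (fun f => f s ≠ 0 ∧ f t ≠ 0)).card ≤
    ((DD F e k).filter (fun f => f s' ≠ 0 ∧ f t' ≠ 0)).card := by
  have hs' : s' - t' ≠ 0 := sub_ne_zero.2 h'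
  have hs : s - t ≠ 0 := sub_ne_zero.2 h
  obtain ⟨u, hu, hu1⟩ : ∃ u, u ≠ 0 ∧ u * (s' - t') = s - t :=
    ⟨(s - t) / (s' - t'), div_ne_zero hs hs', div_mul_cancel₀ _ hs'⟩
  have e1 : u * s' + (s - u * s') = s := by ring
  have e2 : u * t' + (s - u * s') = t := by linear_combination - hu1
  refine Finset.card_le_card_of_injOn (fun f x => f (u * x + (s - u * s'))) ?_ ?_
  · intro f hf
    simp only [Finset.coe_filter, Set.mem_ofPred_eq] at hf ⊢
    refine ⟨DD_affine e k u _ hu f hf.1, ?_⟩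
    rw [e1, e2]; exact hf.2
  · intro f _ g _ hfg
    funext y
    have := congrFun hfg (u⁻¹ * (y - (s - u * s')))
    simp only at this
    rwa [mul_inv_cancel_left₀ hu, sub_add_cancel] at this

lemma DD_count (e k : ℕ) (s t : F) (h : s ≠ t) :
    Fintype.card F * (Fintype.card F - 1) * ((DD F e k).filter (fun f => f s ≠ 0 ∧ f t ≠ 0)).card =
      (DD F e k).card * (k * (k - 1)) :=
  design_count (DD F e k) k _ (fun f hf => ((mem_DD e k f).1 hf).2)
    (fun s' t' h' => le_antisymm (DD_le e k _ _ _ _ h' h) (DD_le e k _ _ _ _ h h'))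

lemma DD_card (m e k : ℕ) (hF : Fintype.card F = 2 ^ m) (he1 : 1 ≤ e) (he : 2 * e < m)
    (heven : Even (m / Nat.gcd m e)) :
    (DD F e k).card =
      Nat.card {p : F × F × ZMod 2 // chi2 p.2.2 * SS e p.1 p.2.1 = (2 ^ m : ℤ) - 2 * k} := by
  classical
  have h1 : DD F e k = (univ.filter (fun p : F × F × ZMod 2 =>
      chi2 p.2.2 * SS e p.1 p.2.1 = (2 ^ m : ℤ) - 2 * k)).image (gg e) := by
    ext f
    rw [mem_DD, Finset.mem_image]
    constructor
    · rintro ⟨⟨p, rfl⟩, h⟩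
      refine ⟨p, ?_, rfl⟩
      simp only [mem_filter, mem_univ, true_and]
      rw [← sum_chi_gg, h, hF]; push_cast; rfl
    · rintro ⟨p, hp, rfl⟩
      refine ⟨⟨p, rfl⟩, ?_⟩
      simp only [mem_filter, mem_univ, true_and] at hp
      rw [← sum_chi_gg, hF] at hp
      push_cast at hp
      omega
  rw [h1, Finset.card_image_of_injective _ (gg_injective m e hF he1 he heven),
    Nat.card_eq_fintype_card, Fintype.card_subtype]

lemma final_R (m e k : ℕ) (hF : Fintype.card F = 2 ^ m) (he1 : 1 ≤ e) (he : 2 * e < m)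
    (heven : Even (m / Nat.gcd m e)) (s t : F) (h : s ≠ t)
    (hw : ((2 ^ m : ℤ) - 2 * k) ^ 2 = 2 ^ m * 2 ^ (2 * Nat.gcd m e)) :
    2 ^ (2 * Nat.gcd m e) * (2 ^ Nat.gcd m e + 1) *
      ((DD F e k).filter (fun f => f s ≠ 0 ∧ f t ≠ 0)).card = k * (k - 1) := by
  have h1 := DD_count e k s t h
  have h2 := count_W_ne (F := F) e (2 ^ (2 * Nat.gcd m e)) (by positivity) _
    (hw.trans (by rw [hF]; push_cast; rfl))
  have h3 := count_R (F := F) m e hF he1 he heven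
  rw [← DD_card m e k hF he1 he heven, hF] at h2
  rw [hF] at h1
  have hq : 0 < 2 ^ m * (2 ^ m - 1) := by
    have : 1 < 2 ^ m := Nat.one_lt_two_pow (by omega)
    exact Nat.mul_pos (by omega) (by omega)
  apply Nat.eq_of_mul_eq_mul_left hq
  generalize ((DD F e k).filter (fun f => f s ≠ 0 ∧ f t ≠ 0)).card = lam at *
  generalize (DD F e k).card = A at *
  generalize Nat.card {a : F // Nat.card (Rad e a) = 2 ^ (2 * Nat.gcd m e)} = N at *
  generalize 2 ^ m - 1 = q1 at *
  generalize k * (k - 1) = K at *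
  generalize 2 ^ (2 * Nat.gcd m e) = R at *
  calc 2 ^ m * q1 * (R * (2 ^ Nat.gcd m e + 1) * lam) = (2 ^ m * q1 * lam) * (R * (2 ^ Nat.gcd m e + 1)) := by ring
    _ = (A * R) * (2 ^ Nat.gcd m e + 1) * K := by rw [h1]; ring
    _ = (N * (2 ^ Nat.gcd m e + 1)) * 2 ^ m * K := by rw [h2]; ring
    _ = _ := by rw [h3]; ring

lemma final_1 (m e k : ℕ) (hF : Fintype.card F = 2 ^ m) (he1 : 1 ≤ e) (he : 2 * e < m)
    (heven : Even (m / Nat.gcd m e)) (s t : F) (h : s ≠ t)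
    (hw : ((2 ^ m : ℤ) - 2 * k) ^ 2 = 2 ^ m) :
    (2 ^ Nat.gcd m e + 1) *
      ((DD F e k).filter (fun f => f s ≠ 0 ∧ f t ≠ 0)).card = 2 ^ Nat.gcd m e * k * (k - 1) := by
  have h1 := DD_count e k s t h
  have h2 := count_W_ne (F := F) e 1 (by positivity) _
    (hw.trans (by rw [hF]; push_cast; ring))
  have h3 := count_1 (F := F) m e hF he1 he heven
  rw [← DD_card m e k hF he1 he heven, hF] at h2
  rw [hF] at h1
  have hq : 0 < 2 ^ m * (2 ^ m - 1) := by
    have : 1 < 2 ^ m := Nat.one_lt_two_pow (by omega)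
    exact Nat.mul_pos (by omega) (by omega)
  apply Nat.eq_of_mul_eq_mul_left hq
  rw [mul_assoc _ k]
  generalize ((DD F e k).filter (fun f => f s ≠ 0 ∧ f t ≠ 0)).card = lam at *
  generalize (DD F e k).card = A at *
  generalize Nat.card {a : F // Nat.card (Rad e a) = 1} = N at *
  generalize 2 ^ m - 1 = q1 at *
  generalize k * (k - 1) = K at *
  calc 2 ^ m * q1 * ((2 ^ Nat.gcd m e + 1) * lam) = (2 ^ m * q1 * lam) * ((2 ^ Nat.gcd m e + 1)) := by ring
    _ = (A * 1) * (2 ^ Nat.gcd m e + 1) * K := by rw [h1]; ring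
    _ = (N * (2 ^ Nat.gcd m e + 1)) * 2 ^ m * K := by rw [h2]; ring
    _ = _ := by rw [h3]; ring

lemma final_0 (m e : ℕ) (hF : Fintype.card F = 2 ^ m) (he1 : 1 ≤ e) (he : 2 * e < m)
    (heven : Even (m / Nat.gcd m e)) (s t : F) (h : s ≠ t) :
    ((DD F e (2 ^ (m - 1))).filter (fun f => f s ≠ 0 ∧ f t ≠ 0)).card =
      ((2 ^ Nat.gcd m e - 1) * 2 ^ (m - 2 * Nat.gcd m e) + 1) * (2 ^ (m - 1) - 1) := by
  have hlt : 2 * Nat.gcd m e < m := by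
    have := Nat.le_of_dvd he1 (Nat.gcd_dvd_right m e)
    omega
  have hqq : 2 ^ m = 2 ^ (m - 2 * Nat.gcd m e) * 2 ^ (2 * Nat.gcd m e) := by
    rw [← pow_add]; congr 1; omega
  have h1 := DD_count e (2 ^ (m - 1)) s t h
  have h2 := count_W_zero (F := F) m e _ hF he1 he heven hqq
  have h3 := count_R (F := F) m e hF he1 he heven
  have hk : 2 ^ m = 2 * 2 ^ (m - 1) := by
    rw [← pow_succ']; congr 1; omega
  have h4 := DD_card (F := F) m e (2 ^ (m - 1)) hF he1 he heven
  have hz : (2 ^ m : ℤ) - 2 * ((2 ^ (m - 1) : ℕ) : ℤ) = 0 := by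
    have : ((2 ^ m : ℕ) : ℤ) = ((2 * 2 ^ (m - 1) : ℕ) : ℤ) := by rw [← hk]
    push_cast at this ⊢
    omega
  rw [hz, h2] at h4
  rw [hF, h4] at h1
  have hD : 2 ^ (2 * Nat.gcd m e) = (2 ^ Nat.gcd m e + 1) * (2 ^ Nat.gcd m e - 1) + 1 := by
    have h2 : 2 ^ (2 * Nat.gcd m e) - 1 = (2 ^ Nat.gcd m e + 1) * (2 ^ Nat.gcd m e - 1) := by
      rw [two_mul, pow_add, ← Nat.sq_sub_sq _ 1, pow_two]
    have : 1 ≤ 2 ^ (2 * Nat.gcd m e) := Nat.one_le_two_pow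
    omega
  have hsub : 2 ^ m - 2 ^ (m - 2 * Nat.gcd m e) =
      2 ^ (m - 2 * Nat.gcd m e) * ((2 ^ Nat.gcd m e + 1) * (2 ^ Nat.gcd m e - 1)) := by
    rw [hqq, hD, mul_add, mul_one, Nat.add_sub_cancel]
  rw [hsub] at h1
  have hq : 0 < 2 ^ m * (2 ^ m - 1) * (2 ^ Nat.gcd m e + 1) := by
    have : 1 < 2 ^ m := Nat.one_lt_two_pow (by omega)
    exact Nat.mul_pos (Nat.mul_pos (by omega) (by omega)) (Nat.succ_pos _)
  apply Nat.eq_of_mul_eq_mul_left hq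
  clear h2 h4 hsub hD hqq hz hq
  generalize ((DD F e (2 ^ (m - 1))).filter (fun f => f s ≠ 0 ∧ f t ≠ 0)).card = lam at *
  generalize Nat.card {a : F // Nat.card (Rad e a) = 2 ^ (2 * Nat.gcd m e)} = N at *
  generalize 2 ^ m - 1 = q1 at *
  generalize 2 ^ (m - 1) - 1 = k1 at *
  generalize 2 ^ Nat.gcd m e - 1 = D1 at *
  generalize 2 ^ Nat.gcd m e + 1 = D2 at *
  generalize 2 ^ (m - 2 * Nat.gcd m e) = q' at *
  calc 2 ^ m * q1 * D2 * lam = (2 ^ m * q1 * lam) * D2 := by ring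
    _ = ((N * D2) * D2 * q' * D1 + q1 * D2) * (2 * 2 ^ (m - 1)) * k1 := by rw [h1]; ring
    _ = _ := by rw [h3, ← hk]; ring
end

lemma sum_castLE {M : Type*} [AddCommMonoid M] {a b : ℕ} (h : a ≤ b) (f : Fin b → M)
    (hf : ∀ i : Fin b, a ≤ i.1 → f i = 0) : ∑ i : Fin a, f (Fin.castLE h i) = ∑ i, f i := by
  refine Finset.sum_of_injOn (Fin.castLE h) (fun x _ y _ hxy => Fin.castLE_injective h hxy) (by simp) ?_
    (fun _ _ => rfl)
  intro i _ hi
  apply hf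
  by_contra hlt
  push Not at hlt
  exact hi ⟨⟨i.1, hlt⟩, by simp, rfl⟩

/-- coordinate positions as field elements -/
noncomputable def pos (m : ℕ) (α : GaloisField 2 m) (i : Fin (2 ^ m)) : GaloisField 2 m :=
  if i.1 < 2 ^ m - 1 then α ^ i.1 else 0

section
variable {m e : ℕ} (α : GaloisField 2 m)

lemma pos_bij (hm : 4 ≤ m) (hα : orderOf α = 2 ^ m - 1) :
    Function.Bijective (pos m α) := by
  have := Fintype.ofFinite (GaloisField 2 m)
  have hcard : Nat.card (GaloisField 2 m) = 2 ^ m := GaloisField.card 2 m (by omega)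
  rw [Nat.card_eq_fintype_card] at hcard
  have h1 : 1 < 2 ^ m := Nat.one_lt_two_pow (by omega)
  have hα0 : α ≠ 0 := by
    rintro rfl
    have : orderOf (0 : GaloisField 2 m) ≠ 0 := by omega
    rw [orderOf_ne_zero_iff, isOfFinOrder_iff_pow_eq_one] at this
    obtain ⟨n, hn, h⟩ := this
    rw [zero_pow hn.ne'] at h
    exact zero_ne_one h
  rw [Fintype.bijective_iff_injective_and_card]
  refine ⟨?_, by simp [hcard]⟩
  intro i j h
  simp only [pos] at h
  split_ifs at h with hi hj hj
  · ext
    exact pow_injOn_Iio_orderOf (by rw [Set.mem_Iio, hα]; exact hi) (by rw [Set.mem_Iio, hα]; exact hj) h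
  · exact absurd h (pow_ne_zero _ hα0)
  · exact absurd h.symm (pow_ne_zero _ hα0)
  · ext; omega

lemma aeval_codePoly (k : ℕ) (hk : k ≠ 0) (c : Fin (2 ^ m) → ZMod 2) :
    aeval (α ^ k) (codePoly (fun i : Fin (2 ^ m - 1) => c (Fin.castLE (Nat.sub_le _ _) i))) =
      ∑ i, c i • pos m α i ^ k := by
  rw [← sum_castLE (Nat.sub_le (2 ^ m) 1)]
  · simp only [codePoly, map_sum, map_mul, aeval_C, map_pow, aeval_X]
    refine Finset.sum_congr rfl fun i _ => ?_
    rw [Algebra.smul_def, pos, if_pos (by simp), ← pow_mul, ← pow_mul, mul_comm k]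
    rfl
  · intro i hi
    rw [pos, if_neg (by omega), zero_pow hk, smul_zero]

lemma minpoly_coprime (he1 : 1 ≤ e) (he : 2 * e < m)
    (heven : Even (m / Nat.gcd m e)) (hα : orderOf α = 2 ^ m - 1) :
    IsCoprime (minpoly (ZMod 2) α) (minpoly (ZMod 2) (α ^ (1 + 2 ^ e))) := by
  have := Fintype.ofFinite (GaloisField 2 m)
  have hcard : Nat.card (GaloisField 2 m) = 2 ^ m := GaloisField.card 2 m (by omega)
  rw [Nat.card_eq_fintype_card] at hcard
  have h1 : 1 < 2 ^ m := Nat.one_lt_two_pow (by omega)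
  rcases (EuclideanDomain.dvd_or_coprime _ (minpoly (ZMod 2) (α ^ (1 + 2 ^ e)))
    (minpoly.irreducible (Algebra.IsIntegral.isIntegral (R := ZMod 2) α))).symm with h | h
  · exact h
  · exfalso
    have hN := count_R (F := GaloisField 2 m) m e hcard he1 he heven
    generalize Nat.card {a : GaloisField 2 m // Nat.card (Rad e a) = 2 ^ (2 * Nat.gcd m e)} = N at hN
    have hd : 0 < Nat.gcd m e := Nat.gcd_pos_of_pos_right _ he1
    have hodd : Odd (e / Nat.gcd m e) := by
      have hc := Nat.coprime_div_gcd_div_gcd hd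
      rw [← Nat.not_even_iff_odd]
      intro h2
      have := Nat.dvd_gcd heven.two_dvd h2.two_dvd
      rw [hc] at this
      omega
    have hdvd : 2 ^ Nat.gcd m e + 1 ∣ 2 ^ e + 1 := by
      have := Odd.nat_add_dvd_pow_add_pow (2 ^ Nat.gcd m e) 1 hodd
      rwa [one_pow, ← pow_mul, Nat.mul_div_cancel' (Nat.gcd_dvd_right m e)] at this
    obtain ⟨r, hr⟩ := hdvd
    have hpow : (α ^ (1 + 2 ^ e)) ^ N = 1 := by
      rw [← pow_mul, add_comm, hr]
      have : (2 ^ Nat.gcd m e + 1) * r * N = orderOf α * r := by rw [hα, ← hN]; ring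
      rw [this, pow_mul, pow_orderOf_eq_one, one_pow]
    have h2 : minpoly (ZMod 2) (α ^ (1 + 2 ^ e)) ∣ X ^ N - 1 := by
      rw [minpoly.dvd_iff]
      simp [hpow]
    have h3 := h.trans h2
    rw [minpoly.dvd_iff] at h3
    have h4 : α ^ N = 1 := by
      rw [← sub_eq_zero]; simpa using h3
    have h5 := orderOf_dvd_of_pow_eq_one h4
    have hN0 : 0 < N := by
      rcases Nat.eq_zero_or_pos N with h | h
      · rw [h] at hN; omega
      · exact h
    have h6 := Nat.le_of_dvd hN0 h5
    rw [hα, ← hN] at h6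
    have : 0 < 2 ^ Nat.gcd m e := by positivity
    nlinarith

lemma mem_CEbar (he1 : 1 ≤ e) (he : 2 * e < m)
    (heven : Even (m / Nat.gcd m e)) (hα : orderOf α = 2 ^ m - 1) (c : Fin (2 ^ m) → ZMod 2) :
    c ∈ CEbar m e α ↔ (∑ i, c i • pos m α i = 0 ∧ ∑ i, c i • pos m α i ^ (1 + 2 ^ e) = 0) ∧
      ∑ i, c i = 0 := by
  have h1 := aeval_codePoly α 1 one_ne_zero c
  simp only [pow_one] at h1
  have h2 := aeval_codePoly α (1 + 2 ^ e) (by positivity) c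
  rw [← h1, ← h2, ← minpoly.dvd_iff, ← minpoly.dvd_iff]
  have hc := minpoly_coprime α he1 he heven hα
  change (gE m e α ∣ _ ∧ _) ↔ _
  rw [gE]
  constructor
  · rintro ⟨h, hsum⟩
    exact ⟨⟨(dvd_mul_right _ _).trans h, (dvd_mul_left _ _).trans h⟩, hsum⟩
  · rintro ⟨h, hsum⟩
    exact ⟨hc.mul_dvd h.1 h.2, hsum⟩

/-- trace description of the code -/
noncomputable def PP (m e : ℕ) (α : GaloisField 2 m) : Submodule (ZMod 2) (Fin (2 ^ m) → ZMod 2) where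
  carrier := {y | ∃ p, ∀ i, y i = gg e p (pos m α i)}
  add_mem' := by
    rintro y z ⟨p, hp⟩ ⟨p', hp'⟩
    have := Fintype.ofFinite (GaloisField 2 m)
    exact ⟨p + p', fun i => by rw [gg_add, Pi.add_apply, hp, hp']⟩
  zero_mem' := ⟨0, fun i => by simp [gg, ff]⟩
  smul_mem' := by
    rintro r y ⟨p, hp⟩
    have hr : r = 0 ∨ r = 1 := by revert r; decide
    rcases hr with rfl | rfl
    · exact ⟨0, fun i => by simp [gg, ff]⟩
    · exact ⟨p, fun i => by simp [hp]⟩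

lemma sum_gg (c : Fin (2 ^ m) → ZMod 2) (p : GaloisField 2 m × GaloisField 2 m × ZMod 2) :
    ∑ i, gg e p (pos m α i) * c i =
      Algebra.trace (ZMod 2) (GaloisField 2 m) (p.1 * ∑ i, c i • pos m α i ^ (1 + 2 ^ e)) +
      Algebra.trace (ZMod 2) (GaloisField 2 m) (p.2.1 * ∑ i, c i • pos m α i) + p.2.2 * ∑ i, c i := by
  simp only [Finset.mul_sum, map_sum, mul_smul_comm, map_smul, smul_eq_mul, gg, ff, add_mul,
    Finset.sum_add_distrib]
  congr 1
  congr 1 <;> exact Finset.sum_congr rfl fun i _ => mul_comm _ _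

lemma mem_dual (he1 : 1 ≤ e) (he : 2 * e < m)
    (heven : Even (m / Nat.gcd m e)) (hα : orderOf α = 2 ^ m - 1) (y : Fin (2 ^ m) → ZMod 2) :
    y ∈ dualCode (CEbar m e α) ↔ ∃ p, ∀ i, y i = gg e p (pos m α i) := by
  have := Fintype.ofFinite (GaloisField 2 m)
  constructor
  · intro hy
    by_contra hn
    have hn' : y ∉ PP m e α := hn
    obtain ⟨L, hL, hPL⟩ := Submodule.exists_le_ker_of_notMem hn'
    have hLs : ∀ z, L z = ∑ i, z i * L (Pi.single i 1) := by
      intro z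
      rw [LinearMap.pi_apply_eq_sum_univ L z]
      refine Finset.sum_congr rfl fun i _ => ?_
      rw [smul_eq_mul]
      congr 2
      funext j
      simp [Pi.single_apply, eq_comm]
    have hP : ∀ p, ∑ i, gg e p (pos m α i) * L (Pi.single i 1) = 0 := by
      intro p
      rw [← hLs (fun i => gg e p (pos m α i))]
      exact hPL ⟨p, fun i => rfl⟩
    simp only [sum_gg] at hP
    apply hL
    rw [hLs]
    refine hy (fun i => L (Pi.single i 1)) ?_
    rw [mem_CEbar α he1 he heven hα]
    refine ⟨⟨?_, ?_⟩, ?_⟩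
    · apply tr_nondeg
      intro x
      rw [mul_comm]
      simpa using hP (0, x, 0)
    · apply tr_nondeg
      intro x
      rw [mul_comm]
      simpa using hP (x, 0, 0)
    · simpa using hP (0, 0, 1)
  · rintro ⟨p, hp⟩ c hc
    rw [mem_CEbar α he1 he heven hα] at hc
    simp only [hp, sum_gg, hc.1.1, hc.1.2, hc.2]
    simp

lemma ncard_eq [Fintype (GaloisField 2 m)] [DecidableEq (GaloisField 2 m)]
    (hm : 4 ≤ m) (he1 : 1 ≤ e) (he : 2 * e < m)
    (heven : Even (m / Nat.gcd m e)) (hα : orderOf α = 2 ^ m - 1) (k : ℕ)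
    (T : Finset (Fin (2 ^ m))) (hT : T.card = 2) :
    ∃ s t : GaloisField 2 m, s ≠ t ∧
    {y : Fin (2 ^ m) → ZMod 2 | y ∈ dualCode (CEbar m e α) ∧
          hammingNorm y = k ∧ ∀ i ∈ T, y i ≠ 0}.ncard =
      ((DD (GaloisField 2 m) e k).filter (fun f => f s ≠ 0 ∧ f t ≠ 0)).card := by
  obtain ⟨i, j, hij, rfl⟩ := Finset.card_eq_two.1 hT
  have hb := pos_bij α hm hα
  refine ⟨pos m α i, pos m α j, hb.1.ne hij, ?_⟩
  rw [← Set.ncard_coe_finset]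
  have hinj : Function.Injective (fun (f : GaloisField 2 m → ZMod 2) => f ∘ pos m α) :=
    hb.2.injective_comp_right
  rw [← Set.ncard_image_of_injective _ hinj]
  congr 1
  have hnorm : ∀ f : GaloisField 2 m → ZMod 2, hammingNorm (f ∘ pos m α) = hammingNorm f := by
    intro f
    rw [hammingNorm, hammingNorm]
    refine Finset.card_bij (fun x _ => pos m α x) ?_ ?_ ?_
    · intro x hx; simpa using hx
    · intro x _ y _ hxy; exact hb.1 hxy
    · intro y hy
      obtain ⟨x, rfl⟩ := hb.2 y
      exact ⟨x, by simpa using hy, rfl⟩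
  ext y
  simp only [Set.mem_ofPred_eq, mem_dual α he1 he heven hα, Set.mem_image, Finset.coe_filter, mem_DD]
  constructor
  · rintro ⟨⟨p, hp⟩, hk, hT⟩
    have hy : gg e p ∘ pos m α = y := funext fun i => (hp i).symm
    refine ⟨gg e p, ⟨⟨⟨p, rfl⟩, ?_⟩, ?_⟩, hy⟩
    · rw [← hnorm, hy, hk]
    · rw [← hp, ← hp]
      exact ⟨hT i (by simp), hT j (by simp)⟩
  · rintro ⟨f, ⟨⟨⟨p, rfl⟩, hk⟩, h1, h2⟩, rfl⟩
    refine ⟨⟨p, fun i => rfl⟩, ?_, ?_⟩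
    · rw [hnorm, hk]
    · intro a ha
      simp only [Finset.mem_insert, Finset.mem_singleton] at ha
      rcases ha with rfl | rfl
      · exact h1
      · exact h2
end

/-- Let `m ≥ 4`, `1 ≤ e < m/2` with `m/gcd(m,e)` even, and
`ℓ = 2·gcd(m,e)`. Then the supports of the codewords of weights
`k = 2^{m−1} ± 2^{(m+ℓ−2)/2}`, `k = 2^{m−1} ± 2^{(m−2)/2}`, and `k = 2^{m−1}` in `C̄_E^⊥`
form `2-(2^m, k, λ)` designs with the corresponding values of `λ` (the divisions in `λ`
are stated multiplied through by their denominators). -/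
theorem dual_code_designs_case_c
    (m e l : ℕ) (hm : 4 ≤ m) (he1 : 1 ≤ e) (he : 2 * e < m)
    (heven : Even (m / Nat.gcd m e)) (hl : l = 2 * Nat.gcd m e)
    (α : GaloisField 2 m) (hα : orderOf α = 2 ^ m - 1) :
    (∀ T : Finset (Fin (2 ^ m)), T.card = 2 →
      2 ^ l * (2 ^ (l / 2) + 1) *
        {y : Fin (2 ^ m) → ZMod 2 | y ∈ dualCode (CEbar m e α) ∧
          hammingNorm y = 2 ^ (m - 1) + 2 ^ ((m + l - 2) / 2) ∧ ∀ i ∈ T, y i ≠ 0}.ncard =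
      (2 ^ (m - 1) + 2 ^ ((m + l - 2) / 2)) * (2 ^ (m - 1) + 2 ^ ((m + l - 2) / 2) - 1)) ∧
    (∀ T : Finset (Fin (2 ^ m)), T.card = 2 →
      2 ^ l * (2 ^ (l / 2) + 1) *
        {y : Fin (2 ^ m) → ZMod 2 | y ∈ dualCode (CEbar m e α) ∧
          hammingNorm y = 2 ^ (m - 1) - 2 ^ ((m + l - 2) / 2) ∧ ∀ i ∈ T, y i ≠ 0}.ncard =
      (2 ^ (m - 1) - 2 ^ ((m + l - 2) / 2)) * (2 ^ (m - 1) - 2 ^ ((m + l - 2) / 2) - 1)) ∧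
    (∀ T : Finset (Fin (2 ^ m)), T.card = 2 →
      (2 ^ (l / 2) + 1) *
        {y : Fin (2 ^ m) → ZMod 2 | y ∈ dualCode (CEbar m e α) ∧
          hammingNorm y = 2 ^ (m - 1) + 2 ^ ((m - 2) / 2) ∧ ∀ i ∈ T, y i ≠ 0}.ncard =
      2 ^ ((m + l - 2) / 2) * (2 ^ (m / 2) + 1) * (2 ^ (m - 1) + 2 ^ ((m - 2) / 2) - 1)) ∧
    (∀ T : Finset (Fin (2 ^ m)), T.card = 2 →
      (2 ^ (l / 2) + 1) *
        {y : Fin (2 ^ m) → ZMod 2 | y ∈ dualCode (CEbar m e α) ∧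
          hammingNorm y = 2 ^ (m - 1) - 2 ^ ((m - 2) / 2) ∧ ∀ i ∈ T, y i ≠ 0}.ncard =
      2 ^ ((m + l - 2) / 2) * (2 ^ (m / 2) - 1) * (2 ^ (m - 1) - 2 ^ ((m - 2) / 2) - 1)) ∧
    (∀ T : Finset (Fin (2 ^ m)), T.card = 2 →
      {y : Fin (2 ^ m) → ZMod 2 | y ∈ dualCode (CEbar m e α) ∧
        hammingNorm y = 2 ^ (m - 1) ∧ ∀ i ∈ T, y i ≠ 0}.ncard =
      ((2 ^ (l / 2) - 1) * 2 ^ (m - l) + 1) * (2 ^ (m - 1) - 1)) := by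
  
  classical
  have := Fintype.ofFinite (GaloisField 2 m)
  have hcard : Nat.card (GaloisField 2 m) = 2 ^ m := GaloisField.card 2 m (by omega)
  rw [Nat.card_eq_fintype_card] at hcard
  have hdm := Nat.gcd_dvd_left m e
  have hde := Nat.le_of_dvd he1 (Nat.gcd_dvd_right m e)
  have hR := fun k s t h hw => final_R (F := GaloisField 2 m) m e k hcard he1 he heven s t h hw
  have h1 := fun k s t h hw => final_1 (F := GaloisField 2 m) m e k hcard he1 he heven s t h hw
  have h0 := fun s t h => final_0 (F := GaloisField 2 m) m e hcard he1 he heven s t h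
  have hn := fun k T hT => ncard_eq (e := e) α hm he1 he heven hα k T hT
  have hmM : ∃ M, m = 2 * M + 2 := by
    obtain ⟨r, hr⟩ := heven
    have h2 : m = Nat.gcd m e * (r + r) := by rw [← hr, Nat.mul_div_cancel' hdm]
    have h3 : m = 2 * (Nat.gcd m e * r) := by
      calc m = Nat.gcd m e * (r + r) := h2
        _ = _ := by ring
    exact ⟨Nat.gcd m e * r - 1, by omega⟩
  obtain ⟨M, hM⟩ := hmM
  generalize hd : Nat.gcd m e = d at *
  have e1 : l / 2 = d := by omega
  have e2 : (m + l - 2) / 2 = M + d := by omega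
  have e3 : (m - 2) / 2 = M := by omega
  have e4 : m / 2 = M + 1 := by omega
  have e5 : m - l = m - 2 * d := by omega
  have e6 : 2 ^ (m - 1) = 2 * 2 ^ M * 2 ^ M := by
    rw [← pow_succ', ← pow_add]; congr 1; omega
  have e7 : (2 : ℤ) ^ m = 4 * 2 ^ M * 2 ^ M := by
    rw [show m = M + M + 2 by omega, pow_add, pow_add]; ring
  have e8 : (2 : ℤ) ^ (2 * d) = 2 ^ d * 2 ^ d := by rw [two_mul, pow_add]
  have hDM : 2 ^ d ≤ 2 ^ M := Nat.pow_le_pow_right (by norm_num) (by omega)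
  have hle : 2 ^ (M + d) ≤ 2 * 2 ^ M * 2 ^ M := by
    rw [pow_add]
    calc 2 ^ M * 2 ^ d ≤ 2 ^ M * 2 ^ M := Nat.mul_le_mul_left _ hDM
      _ ≤ 2 * (2 ^ M * 2 ^ M) := by omega
      _ = _ := by ring
  have hle2 : 2 ^ M ≤ 2 * 2 ^ M * 2 ^ M := by
    have : 1 ≤ 2 ^ M := Nat.one_le_two_pow
    nlinarith
  have c1 : ((2 * 2 ^ M * 2 ^ M - 2 ^ (M + d) : ℕ) : ℤ) = 2 * 2 ^ M * 2 ^ M - 2 ^ M * 2 ^ d := by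
    rw [Nat.cast_sub hle, pow_add]; push_cast; ring
  have c2 : ((2 * 2 ^ M * 2 ^ M - 2 ^ M : ℕ) : ℤ) = 2 * 2 ^ M * 2 ^ M - 2 ^ M := by
    rw [Nat.cast_sub hle2]; push_cast; ring
  rw [e1, e2, e3, e4, e5]
  refine ⟨?_, ?_, ?_, ?_, ?_⟩
  · intro T hT
    obtain ⟨s, t, hst, hc⟩ := hn (2 ^ (m - 1) + 2 ^ (M + d)) T hT
    rw [hc, hl]
    apply hR _ s t hst
    rw [e6, e7, e8]
    push_cast
    rw [pow_add]
    ring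
  · intro T hT
    obtain ⟨s, t, hst, hc⟩ := hn (2 ^ (m - 1) - 2 ^ (M + d)) T hT
    rw [hc, hl]
    apply hR _ s t hst
    rw [e6, e7, e8, c1]
    ring
  · intro T hT
    obtain ⟨s, t, hst, hc⟩ := hn (2 ^ (m - 1) + 2 ^ M) T hT
    rw [hc, h1 _ s t hst]
    · congr 1
      rw [e6, pow_add, pow_succ]; ring
    · rw [e6, e7]
      push_cast
      ring
  · intro T hT
    obtain ⟨s, t, hst, hc⟩ := hn (2 ^ (m - 1) - 2 ^ M) T hT
    rw [hc, h1 _ s t hst]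
    · congr 1
      rw [e6, pow_add, pow_succ]
      have : 2 * 2 ^ M * 2 ^ M - 2 ^ M = 2 ^ M * (2 ^ M * 2 - 1) := by
        rw [Nat.mul_sub_one]; congr 1; ring
      rw [this]; ring
    · rw [e6, e7, c2]
      ring
  · intro T hT
    obtain ⟨s, t, hst, hc⟩ := hn (2 ^ (m - 1)) T hT
    rw [hc, h0 s t hst]
end

section
/- Let m ≡ 2 (mod 4) with m ≥ 6, and let e be an integer with 2 ≤ e ≤ ⌊m/2⌋ and gcd(m,e) = 2. Then the supports of the codewords of Hamming weight 4 in the extended code C̄_E form a 2-(2^m, 4, 1) design, i.e., a Steiner system S(2,4,2^m): every 2-element subset of the 2^m coordinate positions is contained in the support of exactly one codeword of Hamming weight 4 of C̄_E. -/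
open Polynomial Finset

theorem aux_fwd {F : Type*} [Field F] [CharP F 2] (e m : ℕ) (hgcd : Nat.gcd m e = 2)
    (hF : ∀ t : F, t ≠ 0 → t ^ (2 ^ m - 1) = 1) (w : F) (hw : w ^ 2 + w + 1 = 0)
    (x u v : F) (hu : u ≠ 0) (hv : v ≠ 0) (huv : v ≠ u)
    (h : x ^ (1 + 2 ^ e) + (x + u) ^ (1 + 2 ^ e) + (x + v) ^ (1 + 2 ^ e)
      + (x + (u + v)) ^ (1 + 2 ^ e) = 0) : v = u * w ∨ v = u * w ^ 2 := by
  have h2 : (2 : F) = 0 := CharTwo.two_eq_zero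
  simp only [pow_add, pow_one, add_pow_char_pow] at h
  have h1 : u ^ 2 ^ e * v + u * v ^ 2 ^ e = 0 := by
    generalize x ^ 2 ^ e = X at h
    generalize u ^ 2 ^ e = U at h ⊢
    generalize v ^ 2 ^ e = V at h ⊢
    linear_combination h - (2 * x * X + x * U + u * X + u * U + x * V + v * X + v * V) * h2
  obtain ⟨t, rfl⟩ : ∃ t, v = u * t := ⟨v / u, by field_simp⟩
  have ht0 : t ≠ 0 := by rintro rfl; simp at hv
  have ht1 : t ≠ 1 := by rintro rfl; simp at huv
  have h3 : t ^ 2 ^ e = t := by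
    have : u ^ 2 ^ e * u * (t + t ^ 2 ^ e) = 0 := by rw [← h1, mul_pow]; ring
    have h4 : t + t ^ 2 ^ e = 0 := by
      rcases mul_eq_zero.1 this with h | h
      · exact absurd h (mul_ne_zero (pow_ne_zero _ hu) hu)
      · exact h
    linear_combination h4 - t * h2
  have h5 : t ^ (2 ^ e - 1) = 1 := by
    apply mul_right_cancel₀ ht0
    rw [← pow_succ, Nat.sub_add_cancel Nat.one_le_two_pow, h3, one_mul]
  have h6 : t ^ 3 = 1 := by
    have := pow_gcd_eq_one.2 ⟨hF t ht0, h5⟩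
    rwa [Nat.pow_sub_one_gcd_pow_sub_one, hgcd] at this
  have h7 : t ^ 2 + t + 1 = 0 := by
    have : (t - 1) * (t ^ 2 + t + 1) = 0 := by linear_combination h6
    exact (mul_eq_zero.1 this).resolve_left (sub_ne_zero.2 ht1)
  have h8 : (t - w) * (t - w ^ 2) = 0 := by
    linear_combination h7 - t * hw + (w - 1) * hw 
  rcases mul_eq_zero.1 h8 with h | h
  · left; rw [sub_eq_zero.1 h]
  · right; rw [sub_eq_zero.1 h]

theorem aux_bwd {F : Type*} [Field F] [CharP F 2] (e : ℕ) (he : 2 ∣ e)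
    (w : F) (hw : w ^ 2 + w + 1 = 0) (x u : F) :
    x ^ (1 + 2 ^ e) + (x + u) ^ (1 + 2 ^ e) + (x + u * w) ^ (1 + 2 ^ e)
      + (x + u * w ^ 2) ^ (1 + 2 ^ e) = 0 := by
  have h2 : (2 : F) = 0 := CharTwo.two_eq_zero
  have hw3 : w ^ 3 = 1 := by linear_combination (w - 1) * hw
  have hwe : w ^ 2 ^ e = w := by
    obtain ⟨k, rfl⟩ := he
    rw [pow_mul]
    induction k with
    | zero => simp
    | succ k ih =>
      rw [pow_succ, pow_mul, ih]; norm_num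
      linear_combination w * hw3
  simp only [pow_add, pow_one, add_pow_char_pow, mul_pow]
  rw [← pow_mul w 2, mul_comm 2, pow_mul w, hwe]
  generalize x ^ 2 ^ e = X
  generalize u ^ 2 ^ e = U
  linear_combination (2 * x * X) * h2 + (x * U + u * X) * hw + u * U * hw + u * U * w * hw3

theorem aux_set {F : Type*} [Field F] [CharP F 2] [DecidableEq F] (e m : ℕ)
    (hgcd : Nat.gcd m e = 2)
    (hF : ∀ t : F, t ≠ 0 → t ^ (2 ^ m - 1) = 1) (w : F) (hw : w ^ 2 + w + 1 = 0)
    (x y : F) (hxy : x ≠ y) (S : Finset F) :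
    (S.card = 4 ∧ x ∈ S ∧ y ∈ S ∧ ∑ s ∈ S, s = 0 ∧ ∑ s ∈ S, s ^ (1 + 2 ^ e) = 0) ↔
      S = {x, y, x + (x + y) * w, x + (x + y) * w ^ 2} := by
  have h2 : (2 : F) = 0 := CharTwo.two_eq_zero
  have hu : x + y ≠ 0 := fun h => hxy (by linear_combination h - y * h2)
  have hw0 : w ≠ 0 := by rintro rfl; simp at hw
  have hw1 : w ≠ 1 := by rintro rfl; exact one_ne_zero (by linear_combination hw - h2)
  have hyx : y = x + (x + y) := by linear_combination - x * h2
  have hww : w ^ 2 = 1 + w := by linear_combination hw - (1 + w) * h2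
  constructor
  · rintro ⟨hc, hx, hy, hs, hp⟩
    have hy' : y ∈ S.erase x := Finset.mem_erase.2 ⟨hxy.symm, hy⟩
    have hc2 : ((S.erase x).erase y).card = 2 := by
      rw [Finset.card_erase_of_mem hy', Finset.card_erase_of_mem hx, hc]
    obtain ⟨z, t, hzt, hE⟩ := Finset.card_eq_two.1 hc2
    have hS : S = insert x (insert y {z, t}) := by
      rw [← hE, Finset.insert_erase hy', Finset.insert_erase hx]
    have hz : z ∈ (S.erase x).erase y := by simp [hE]
    have ht : t ∈ (S.erase x).erase y := by simp [hE]
    simp only [Finset.mem_erase] at hz ht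
    have e1 : ∀ f : F → F, ∑ s ∈ S, f s = f x + f y + f z + f t := by
      intro f
      rw [hS, Finset.sum_insert, Finset.sum_insert, Finset.sum_pair hzt]
      · ring
      · simp [hz.1.symm, ht.1.symm]
      · simp [hxy, hz.2.1.symm, ht.2.1.symm]
    rw [e1] at hs hp
    have htt : t = x + ((x + y) + (x + z)) := by linear_combination hs - (x + y + z + x) * h2
    have hzz : z = x + (x + z) := by linear_combination - x * h2
    have key := aux_fwd e m hgcd hF w hw x (x + y) (x + z) hu
      (fun h => hz.2.1 (by linear_combination h - x * h2))
      (fun h => hz.1 (by linear_combination h))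
      (by rw [← hyx, ← hzz, ← htt]; exact hp)
    rcases key with h | h
    · have hz' : z = x + (x + y) * w := by rw [← h]; exact hzz
      have ht' : t = x + (x + y) * w ^ 2 := by rw [htt, h, hww]; ring
      rw [hS, ← hz', ← ht']
    · have hz' : z = x + (x + y) * w ^ 2 := by rw [← h]; exact hzz
      have ht' : t = x + (x + y) * w := by
        rw [htt, h, hww]; linear_combination (x + y) * h2
      rw [hS, ← hz', ← ht', Finset.pair_comm]
  · rintro rfl
    have n1 : x ≠ x + (x + y) * w := fun h => mul_ne_zero hu hw0 (by linear_combination - h)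
    have n2 : x ≠ x + (x + y) * w ^ 2 := fun h =>
      mul_ne_zero hu (pow_ne_zero 2 hw0) (by linear_combination - h)
    have n3 : y ≠ x + (x + y) * w := fun h =>
      mul_ne_zero hu (sub_ne_zero.2 hw1) (by linear_combination - h - x * h2)
    have n4 : y ≠ x + (x + y) * w ^ 2 := fun h =>
      mul_ne_zero hu hw0 (by rw [hww] at h; linear_combination - h - x * h2)
    have n5 : x + (x + y) * w ≠ x + (x + y) * w ^ 2 := fun h =>
      hu (by rw [hww] at h; linear_combination - h)
    have e1 : ∀ f : F → F, ∑ s ∈ ({x, y, x + (x + y) * w, x + (x + y) * w ^ 2} : Finset F), f s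
        = f x + f y + f (x + (x + y) * w) + f (x + (x + y) * w ^ 2) := by
      intro f
      rw [Finset.sum_insert, Finset.sum_insert, Finset.sum_pair n5]
      · ring
      · simp [n3, n4]
      · simp [hxy, n1, n2]
    refine ⟨?_, by simp, by simp, ?_, ?_⟩
    · rw [Finset.card_insert_of_notMem, Finset.card_insert_of_notMem, Finset.card_pair n5]
      · simp [n3, n4]
      · simp [hxy, n1, n2]
    · rw [e1, hww]; linear_combination (2 * x + y + (x + y) * w) * h2
    · rw [e1]
      have := aux_bwd e (hgcd ▸ Nat.gcd_dvd_right m e) w hw x (x + y)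
      rwa [← hyx] at this

theorem aux_coprime (m e : ℕ) (hm : 6 ≤ m) (he2 : 2 ≤ e) (heM : 2 * e ≤ m)
    (α : GaloisField 2 m) (hα : orderOf α = 2 ^ m - 1) :
    IsCoprime (minpoly (ZMod 2) α) (minpoly (ZMod 2) (α ^ (1 + 2 ^ e))) := by
  have hi : ∀ b : GaloisField 2 m, IsIntegral (ZMod 2) b := fun b =>
    Algebra.IsIntegral.isIntegral b
  rcases EuclideanDomain.dvd_or_coprime (minpoly (ZMod 2) α)
    (minpoly (ZMod 2) (α ^ (1 + 2 ^ e))) (minpoly.irreducible (hi α)) with h | h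
  swap
  · exact h
  exfalso
  have heq : minpoly (ZMod 2) α = minpoly (ZMod 2) (α ^ (1 + 2 ^ e)) :=
    Polynomial.eq_of_monic_of_associated (minpoly.monic (hi _)) (minpoly.monic (hi _))
      ((minpoly.irreducible (hi α)).associated_of_dvd (minpoly.irreducible (hi _)) h)
  obtain ⟨σ, hσ⟩ := (isConjRoot_iff_exists_algEquiv (K := ZMod 2)).1 heq.symm
  obtain ⟨j, hj⟩ := (FiniteField.bijective_frobeniusAlgEquivOfAlgebraic_pow (ZMod 2)
    (GaloisField 2 m)).2 σ
  have hfr : Module.finrank (ZMod 2) (GaloisField 2 m) = m := GaloisField.finrank 2 (by omega)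
  have hjm : (j : ℕ) < m := by have := j.2; omega
  rw [← hj] at hσ
  have hb : ∀ (k : ℕ) (z : GaloisField 2 m),
      (FiniteField.frobeniusAlgEquivOfAlgebraic (ZMod 2) (GaloisField 2 m) ^ k) z
        = z ^ 2 ^ k := by
    intro k z
    rw [AlgEquiv.coe_pow, FiniteField.coe_frobeniusAlgEquivOfAlgebraic_iterate]
    simp
  simp only [hb] at hσ
  have l1 : 2 ^ (j : ℕ) ≤ 2 ^ (m - 1) := Nat.pow_le_pow_right (by norm_num) (by omega)
  have l2 : 2 ^ e ≤ 2 ^ (m - 1) / 2 := by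
    obtain ⟨k, rfl⟩ : ∃ k, m = k + 2 := ⟨m - 2, by omega⟩
    rw [show k + 2 - 1 = k + 1 by omega, pow_succ, Nat.mul_div_cancel _ (by norm_num)]
    exact Nat.pow_le_pow_right (by norm_num) (by omega)
  have l3 : 2 ^ m = 2 * 2 ^ (m - 1) := by rw [← pow_succ']; congr 1; omega
  have l4 : 2 ^ 5 ≤ 2 ^ (m - 1) := Nat.pow_le_pow_right (by norm_num) (by omega)
  have heq2 : 2 ^ (j : ℕ) = 1 + 2 ^ e := by
    apply pow_injOn_Iio_orderOf (x := α) _ _ hσ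
    · simp only [Set.mem_Iio, hα]; omega
    · simp only [Set.mem_Iio, hα]; omega
  obtain ⟨f, rfl⟩ : ∃ f, e = f + 1 := ⟨e - 1, by omega⟩
  rcases Nat.eq_zero_or_pos (j : ℕ) with h0 | h0
  · rw [h0] at heq2
    have := Nat.one_le_two_pow (n := f + 1)
    omega
  · obtain ⟨i, hi⟩ : ∃ i, (j : ℕ) = i + 1 := ⟨j - 1, by omega⟩
    rw [hi, pow_succ, pow_succ] at heq2
    omega

theorem aux_sum {A : Type*} [AddCommMonoid A] (N n : ℕ) (h : N = n + 1) (hle : n ≤ N)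
    (g : Fin N → A) :
    ∑ i, g i = ∑ i : Fin n, g (Fin.castLE hle i) + g ⟨n, by omega⟩ := by
  subst h
  rw [Fin.sum_univ_castSucc]
  rfl

/-- The locator of a coordinate position. -/
noncomputable def locE (m : ℕ) (α : GaloisField 2 m) (i : Fin (2 ^ m)) : GaloisField 2 m :=
  if (i : ℕ) < 2 ^ m - 1 then α ^ (i : ℕ) else 0

theorem locE_bij (m : ℕ) (hm : 6 ≤ m)
    (α : GaloisField 2 m) (hα : orderOf α = 2 ^ m - 1) : Function.Bijective (locE m α) := by
  have l4 : 2 ^ 5 ≤ 2 ^ m := Nat.pow_le_pow_right (by norm_num) (by omega)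
  have hα0 : α ≠ 0 := by
    rintro rfl
    simp at hα
    omega
  rw [Nat.bijective_iff_injective_and_card]
  refine ⟨?_, by rw [GaloisField.card 2 m (by omega), Nat.card_eq_fintype_card, Fintype.card_fin]⟩
  intro i j h
  have := i.2
  have := j.2
  unfold locE at h
  ext
  split_ifs at h with h1 h2 h2
  · exact pow_injOn_Iio_orderOf (x := α) (by simpa [hα] using h1) (by simpa [hα] using h2) h
  · exact absurd h (pow_ne_zero _ hα0)
  · exact absurd h.symm (pow_ne_zero _ hα0)
  · omega

theorem aux_CE (m e : ℕ) (hm : 6 ≤ m) (he2 : 2 ≤ e) (heM : 2 * e ≤ m)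
    (α : GaloisField 2 m) (hα : orderOf α = 2 ^ m - 1) (c : Fin (2 ^ m) → ZMod 2) :
    c ∈ CEbar m e α ↔ (∑ i, algebraMap (ZMod 2) (GaloisField 2 m) (c i) * locE m α i = 0 ∧
      ∑ i, algebraMap (ZMod 2) (GaloisField 2 m) (c i) * locE m α i ^ (1 + 2 ^ e) = 0) ∧
      ∑ i, c i = 0 := by
  have key : ∀ k : ℕ, k ≠ 0 →
      ∑ i, algebraMap (ZMod 2) (GaloisField 2 m) (c i) * locE m α i ^ k =
      aeval (α ^ k) (codePoly
        (fun i : Fin (2 ^ m - 1) => c (Fin.castLE (Nat.sub_le _ _) i))) := by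
    intro k hk
    have : 1 ≤ 2 ^ m := Nat.one_le_two_pow
    rw [aux_sum (2 ^ m) (2 ^ m - 1) (by omega) (Nat.sub_le _ _)]
    simp only [codePoly, map_sum, map_mul, aeval_C, map_pow, aeval_X]
    simp only [locE, Fin.val_castLE, Fin.is_lt, if_true, lt_irrefl, if_false, zero_pow hk,
      mul_zero, add_zero]
    refine Finset.sum_congr rfl fun i _ => ?_
    rw [← pow_mul, ← pow_mul, mul_comm k]
  have k1 := key 1 one_ne_zero
  simp only [pow_one] at k1
  rw [k1, key (1 + 2 ^ e) (by positivity)]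
  simp only [CEbar, CE, gE, Set.mem_ofPred_eq]
  rw [← minpoly.dvd_iff, ← minpoly.dvd_iff]
  refine and_congr_left fun _ => ⟨fun h => ⟨dvd_of_mul_right_dvd h, dvd_of_mul_left_dvd h⟩,
    fun h => (aux_coprime m e hm he2 heM α hα).mul_dvd h.1 h.2⟩

/-- For `m ≡ 2 (mod 4)` with `m ≥ 6`, and `2 ≤ e ≤ ⌊m/2⌋` with
`gcd(m,e) = 2`, the supports of the weight-4 codewords of `C̄_E` form a Steiner system
`S(2, 4, 2^m)`: every 2-element subset of the `2^m` coordinate positions is contained in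
the support of exactly one codeword of Hamming weight 4. -/
theorem steiner_system_S_2_4_2m_of_mod_four_eq_two
    (m e : ℕ) (hm4 : m % 4 = 2) (hm : 6 ≤ m)
    (he2 : 2 ≤ e) (heM : 2 * e ≤ m) (hgcd : Nat.gcd m e = 2)
    (α : GaloisField 2 m) (hα : orderOf α = 2 ^ m - 1) :
    ∀ T : Finset (Fin (2 ^ m)), T.card = 2 →
      {c : Fin (2 ^ m) → ZMod 2 |
        c ∈ CEbar m e α ∧ hammingNorm c = 4 ∧ ∀ i ∈ T, c i ≠ 0}.ncard = 1 := by
  classical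
  intro T hT
  obtain ⟨a, b, hab, rfl⟩ := Finset.card_eq_two.1 hT
  have l4 : 2 ^ 5 ≤ 2 ^ m := Nat.pow_le_pow_right (by norm_num) (by omega)
  have : Fintype (GaloisField 2 m) := Fintype.ofFinite _
  have hcard : Fintype.card (GaloisField 2 m) = 2 ^ m := by
    rw [← Nat.card_eq_fintype_card, GaloisField.card 2 m (by omega)]
  have hF : ∀ t : GaloisField 2 m, t ≠ 0 → t ^ (2 ^ m - 1) = 1 := by
    intro t ht
    rw [← hcard]
    exact FiniteField.pow_card_sub_one_eq_one t ht
  obtain ⟨w, hw⟩ : ∃ w : GaloisField 2 m, w ^ 2 + w + 1 = 0 := by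
    obtain ⟨k, hk⟩ : 3 ∣ 2 ^ m - 1 := by
      have h1 : Even m := ⟨m / 2, by omega⟩
      obtain ⟨r, hr⟩ := h1
      have := Nat.sub_dvd_pow_sub_pow 4 1 r
      rw [hr, ← two_mul, pow_mul]
      simpa using this
    have h1 : (α ^ k) ^ 3 = 1 := by
      rw [← pow_mul, mul_comm, ← hk, ← hα, pow_orderOf_eq_one]
    have h2 : α ^ k ≠ 1 := by
      intro h
      have := orderOf_le_of_pow_eq_one (by omega) h
      omega
    refine ⟨α ^ k, ?_⟩
    have h3 : (α ^ k - 1) * ((α ^ k) ^ 2 + α ^ k + 1) = 0 := by linear_combination h1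
    exact (mul_eq_zero.1 h3).resolve_left (sub_ne_zero.2 h2)
  set L : Fin (2 ^ m) ≃ GaloisField 2 m := Equiv.ofBijective _ (locE_bij m hm α hα) with hL
  have hLi : ∀ i, L i = locE m α i := fun i => rfl
  set S0 : Finset (GaloisField 2 m) :=
    {L a, L b, L a + (L a + L b) * w, L a + (L a + L b) * w ^ 2} with hS0
  have hset := aux_set e m hgcd hF w hw (L a) (L b) (fun h => hab (L.injective h))
  have hz : ∀ z : ZMod 2, z ≠ 0 → z = 1 := by decide
  have hsum : ∀ (c : Fin (2 ^ m) → ZMod 2) (f : GaloisField 2 m → GaloisField 2 m),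
      ∑ i, algebraMap (ZMod 2) (GaloisField 2 m) (c i) * f (locE m α i) =
      ∑ s ∈ (univ.filter (fun i => c i ≠ 0)).map L.toEmbedding, f s := by
    intro c f
    rw [Finset.sum_map, Finset.sum_filter]
    refine Finset.sum_congr rfl fun i _ => ?_
    split_ifs with h
    · rw [hz _ h]; simp [hLi]
    · simp [not_not.1 h]
  have hmain : ∀ c : Fin (2 ^ m) → ZMod 2,
      (c ∈ CEbar m e α ∧ hammingNorm c = 4 ∧ ∀ i ∈ ({a, b} : Finset (Fin (2 ^ m))), c i ≠ 0) ↔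
      (univ.filter (fun i => c i ≠ 0)).map L.toEmbedding = S0 := by
    intro c
    rw [← hset, aux_CE m e hm he2 heM α hα, hsum c (fun x => x),
      hsum c (fun x => x ^ (1 + 2 ^ e)), Finset.card_map]
    have hn : hammingNorm c = (univ.filter (fun i => c i ≠ 0)).card := rfl
    have hpar : (univ.filter (fun i => c i ≠ 0)).card = 4 → ∑ i, c i = 0 := by
      intro h
      have : ∑ i, c i = ∑ i ∈ univ.filter (fun i => c i ≠ 0), (1 : ZMod 2) := by
        rw [Finset.sum_filter]
        refine Finset.sum_congr rfl fun i _ => ?_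
        split_ifs with h
        · exact hz _ h
        · exact not_not.1 h
      rw [this, Finset.sum_const, h]
      decide
    rw [hn]
    have hma : ∀ i, L i ∈ (univ.filter (fun i => c i ≠ 0)).map L.toEmbedding ↔ c i ≠ 0 := by
      intro i; simp
    rw [hma, hma]
    simp only [Finset.mem_insert, Finset.mem_singleton, forall_eq_or_imp, forall_eq]
    tauto
  rw [Set.ncard_eq_one]
  refine ⟨fun i => if L i ∈ S0 then 1 else 0, ?_⟩
  ext c
  rw [Set.mem_ofPred_eq, hmain, Set.mem_singleton_iff]
  constructor
  · intro h
    funext i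
    rw [← h]
    by_cases hc : c i = 0
    · simp [hc]
    · simp [hc, hz _ hc]
  · rintro rfl
    ext x
    obtain ⟨i, rfl⟩ := L.surjective x
    simp
end
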